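/- arXiv:2508.07916 — 9 statements merged into one kernel-verified Lean document; each statement's English description precedes it below -/
import Mathlib

section
/- Let n be a positive integer. Then there is no binary isolation of the unary form n·x². Concretely: there is no positive definite binary quadratic form F(x,y) = Ax² + Bxy + Cy² with A, B, C ∈ ℤ such that F represents n·k² for every integer k ≥ 2 but F does not represent n. Equivalently, if a positive definite integral binary quadratic form represents n·k² for every integer k ≥ 2, then it represents n itself. -/
/-!
If the discriminant `D` of a binary form is not a square modulo a prime `p`, then the form is
anisotropic modulo `p`: it takes values divisible by `p` only at vectors divisible by `p`. Dividing
such a vector by `p` turns a representation of `n * p ^ 2` into one of `n`. When `D < 0`, such a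
prime exists: the number `-4 * D - 1` is congruent to `3` modulo `4`, so it has a prime factor
`p ≡ 3 (mod 4)`; modulo `p` we have `4 * D = -1`, which is not a square.
-/

section CommRing

variable {R : Type*} [CommRing R]

/-- The value at `(x, y)` of the binary quadratic form with coefficients `A`, `B`, `C`. The middle
coefficient is `B`, not `2 * B`, so that the discriminant of the form is `discrim A B C`. -/
def binaryForm (A B C x y : R) : R :=
  A * x ^ 2 + B * x * y + C * y ^ 2

/-- The form `binaryForm A B C` represents `m` over the ring of its coefficients. -/
def Represents (A B C m : R) : Prop :=
  ∃ x y : R, binaryForm A B C x y = m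

theorem binaryForm_swap (A B C x y : R) : binaryForm C B A y x = binaryForm A B C x y := by
  simp only [binaryForm]
  ring

theorem binaryForm_mul_mul (A B C r x y : R) :
    binaryForm A B C (r * x) (r * y) = r ^ 2 * binaryForm A B C x y := by
  simp only [binaryForm]
  ring

theorem map_binaryForm {S : Type*} [CommRing S] (φ : R →+* S) (A B C x y : R) :
    φ (binaryForm A B C x y) = binaryForm (φ A) (φ B) (φ C) (φ x) (φ y) := by
  simp only [binaryForm, map_add, map_mul, map_pow]

theorem map_discrim {S : Type*} [CommRing S] (φ : R →+* S) (A B C : R) :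
    φ (discrim A B C) = discrim (φ A) (φ B) (φ C) := by
  simp only [discrim, map_sub, map_mul, map_pow, map_ofNat]

theorem discrim_swap (A B C : R) : discrim C B A = discrim A B C := by
  simp only [discrim]
  ring

-- Multiplying the form by `4 * A` completes the square.
theorem discrim_mul_sq_of_binaryForm_eq_zero {A B C x y : R} (h : binaryForm A B C x y = 0) :
    discrim A B C * y ^ 2 = (2 * A * x + B * y) ^ 2 := by
  simp only [binaryForm] at h
  rw [discrim]
  linear_combination -4 * A * h

end CommRing

section Anisotropic

variable {K : Type*} [Field K] {A B C x y : K}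

theorem snd_eq_zero_of_binaryForm_eq_zero (hD : ¬IsSquare (discrim A B C))
    (h : binaryForm A B C x y = 0) : y = 0 := by
  by_contra hy
  refine hD ⟨(2 * A * x + B * y) / y, ?_⟩
  rw [← sq, div_pow, ← discrim_mul_sq_of_binaryForm_eq_zero h,
    mul_div_cancel_right₀ _ (pow_ne_zero 2 hy)]

theorem eq_zero_of_binaryForm_eq_zero (hD : ¬IsSquare (discrim A B C))
    (h : binaryForm A B C x y = 0) : x = 0 ∧ y = 0 := by
  refine ⟨?_, snd_eq_zero_of_binaryForm_eq_zero hD h⟩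
  rw [← discrim_swap] at hD
  rw [← binaryForm_swap] at h
  exact snd_eq_zero_of_binaryForm_eq_zero hD h

end Anisotropic

section Descent

variable {R K : Type*} [CommRing R] [Field K] {A B C p : R}

theorem dvd_of_dvd_binaryForm (φ : R →+* K) (hφ : RingHom.ker φ = Ideal.span {p})
    (hD : ¬IsSquare (φ (discrim A B C))) {x y : R} (h : p ∣ binaryForm A B C x y) :
    p ∣ x ∧ p ∣ y := by
  have map_eq_zero_iff_dvd (r : R) : φ r = 0 ↔ p ∣ r := by
    rw [← RingHom.mem_ker, hφ, Ideal.mem_span_singleton]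
  rw [map_discrim] at hD
  rw [← map_eq_zero_iff_dvd, map_binaryForm] at h
  exact (eq_zero_of_binaryForm_eq_zero hD h).imp (map_eq_zero_iff_dvd x).1
    (map_eq_zero_iff_dvd y).1

theorem Represents.of_mul_sq [IsDomain R] (φ : R →+* K) (hφ : RingHom.ker φ = Ideal.span {p})
    (hp : p ≠ 0) (hD : ¬IsSquare (φ (discrim A B C))) {n : R}
    (h : Represents A B C (n * p ^ 2)) : Represents A B C n := by
  obtain ⟨x, y, hxy⟩ := h
  have hdvd : p ∣ binaryForm A B C x y := hxy ▸ (dvd_pow_self p two_ne_zero).mul_left n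
  obtain ⟨⟨u, rfl⟩, ⟨v, rfl⟩⟩ := dvd_of_dvd_binaryForm φ hφ hD hdvd
  refine ⟨u, v, mul_left_cancel₀ (pow_ne_zero 2 hp) ?_⟩
  rw [← binaryForm_mul_mul, hxy, mul_comm]

end Descent

theorem exists_prime_dvd_mod_four_eq_three {n : ℕ} (hn : n % 4 = 3) :
    ∃ p : ℕ, p.Prime ∧ p ∣ n ∧ p % 4 = 3 := by
  have hJ : jacobiSym (-1) n = -1 := by
    rw [jacobiSym.at_neg_one (Nat.odd_iff.2 (Nat.odd_of_mod_four_eq_three hn)),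
      ZMod.χ₄_nat_three_mod_four hn]
  obtain ⟨p, hp, hpn, hJp⟩ := jacobiSym.eq_neg_one_at_prime_divisor_of_eq_neg_one hJ
  have : Fact p.Prime := ⟨hp⟩
  have hnonsquare : ¬IsSquare (-1 : ZMod p) := by
    simpa using ZMod.nonsquare_of_jacobiSym_eq_neg_one hJp
  exact ⟨p, hp, hpn, by simpa [ZMod.exists_sq_eq_neg_one_iff] using hnonsquare⟩

theorem exists_prime_not_isSquare_of_neg {d : ℤ} (hd : d < 0) :
    ∃ p : ℕ, p.Prime ∧ p % 4 = 3 ∧ ¬IsSquare (d : ZMod p) := by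
  obtain ⟨p, hp, hpd, hp3⟩ :=
    exists_prime_dvd_mod_four_eq_three (n := (-4 * d - 1).toNat) (by lia)
  refine ⟨p, hp, hp3, fun hsq ↦ ?_⟩
  have : Fact p.Prime := ⟨hp⟩
  have hdvd : (p : ℤ) ∣ -4 * d - 1 := by
    rwa [← Int.toNat_of_nonneg (show 0 ≤ -4 * d - 1 by lia), Int.natCast_dvd_natCast]
  have hmod : (2 : ZMod p) ^ 2 * d = -1 := by
    have := (ZMod.intCast_zmod_eq_zero_iff_dvd _ p).2 hdvd
    push_cast at this
    linear_combination -this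
  exact ZMod.exists_sq_eq_neg_one_iff.1 (hmod ▸ (IsSquare.sq 2).mul hsq) hp3

theorem no_binary_isolation_of_unary_general {A B C n : ℤ} (hD : discrim A B C < 0)
    (hrep : ∀ p : ℕ, p.Prime → p % 4 = 3 → Represents A B C (n * (p : ℤ) ^ 2)) :
    Represents A B C n := by
  obtain ⟨p, hp, hp3, hnonsquare⟩ := exists_prime_not_isSquare_of_neg hD
  have : Fact p.Prime := ⟨hp⟩
  exact (hrep p hp hp3).of_mul_sq (Int.castRingHom (ZMod p)) (ZMod.ker_intCastRingHom p)
    (mod_cast hp.ne_zero) hnonsquare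

/-- If a positive definite integral binary quadratic form represents
`n * k ^ 2` for every integer `k ≥ 2`, then it represents `n` itself
(i.e. there is no binary isolation of the unary form `n • x²`). -/
theorem no_binary_isolation_of_unary (n : ℤ) (hn : 0 < n)
    (A B C : ℤ) (hA : 0 < A) (hdisc : B ^ 2 - 4 * A * C < 0)
    (hrep : ∀ k : ℤ, 2 ≤ k → ∃ x y : ℤ, A * x ^ 2 + B * x * y + C * y ^ 2 = n * k ^ 2) :
    ∃ x y : ℤ, A * x ^ 2 + B * x * y + C * y ^ 2 = n :=
  no_binary_isolation_of_unary_general hdisc fun p hp _ ↦ hrep p (mod_cast hp.two_le)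
end

section
/- Let n be a positive integer and let f(x,y) = a x² + b x y + c y² be a primitive positive definite integral binary quadratic form of discriminant D = b² − 4ac < 0. Let p be a prime such that the Kronecker symbol (D/p) = −1, i.e., either p is odd and D is a quadratic non-residue modulo p, or p = 2 and D ≡ 5 (mod 8). If f represents n p², then f represents n. -/
/-!
Since discriminants are squares modulo `4`, the condition `(D/p) = -1` says, uniformly in `p`, that
`D` is not a square modulo `4 * p`. If `t` is a root of `t ^ 2 + b * t + a * c` modulo `p`, then
`(2 * t + b) ^ 2 = D + 4 * (t ^ 2 + b * t + a * c)` exhibits `D` as a square modulo `4 * p`; so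
there is no such root. A zero `(x, y)` of the form modulo `p` with `y ≠ 0` would give the root
`a * x / y`, hence the form is anisotropic modulo `p`: if it takes a value divisible by `p` at
`(x, y)`, then `p` divides both `x` and `y`, and `p ^ 2` can be cancelled.
-/

theorem isSquare_discrim_of_dvd_quadratic {m : ℕ} {a b c t : ℤ}
    (ht : (m : ℤ) ∣ t ^ 2 + b * t + a * c) :
    IsSquare ((discrim a b c : ℤ) : ZMod (4 * m)) := by
  have hdvd : ((4 * m : ℕ) : ℤ) ∣ (2 * t + b) ^ 2 - discrim a b c := by
    have hsq : (2 * t + b) ^ 2 - discrim a b c = 4 * (t ^ 2 + b * t + a * c) := by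
      rw [discrim]
      ring
    rw [hsq]
    exact_mod_cast mul_dvd_mul_left 4 ht
  rw [(ZMod.intCast_eq_intCast_iff_dvd_sub _ _ _).2 hdvd, Int.cast_pow]
  exact IsSquare.sq _

theorem eq_zero_of_binary_quadratic_eq_zero {K : Type*} [Field K] {a b c x y : K}
    (hroot : ∀ t : K, t ^ 2 + b * t + a * c ≠ 0)
    (hxy : a * x ^ 2 + b * x * y + c * y ^ 2 = 0) : x = 0 ∧ y = 0 := by
  have hy : y = 0 := by
    by_contra hy
    apply hroot (a * x / y)
    field_simp
    linear_combination a * hxy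
  have ha : a ≠ 0 := by
    rintro rfl
    exact hroot 0 (by ring)
  exact ⟨by simpa [hy, ha] using hxy, hy⟩

theorem dvd_of_dvd_binary_quadratic {p : ℕ} (hp : p.Prime) {a b c x y : ℤ}
    (hsq : ¬ IsSquare ((discrim a b c : ℤ) : ZMod (4 * p)))
    (hxy : (p : ℤ) ∣ a * x ^ 2 + b * x * y + c * y ^ 2) : (p : ℤ) ∣ x ∧ (p : ℤ) ∣ y := by
  have : Fact p.Prime := ⟨hp⟩
  have hroot (t : ZMod p) : t ^ 2 + b * t + ((a : ZMod p) * c) ≠ 0 := by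
    obtain ⟨t, rfl⟩ := ZMod.intCast_surjective t
    intro ht
    exact hsq (isSquare_discrim_of_dvd_quadratic
      ((ZMod.intCast_zmod_eq_zero_iff_dvd _ p).1 (by exact_mod_cast ht)))
  simp only [← ZMod.intCast_zmod_eq_zero_iff_dvd] at hxy ⊢
  exact eq_zero_of_binary_quadratic_eq_zero hroot (by exact_mod_cast hxy)

theorem not_isSquare_zmod_four_mul_of_kronecker_neg_one {p : ℕ} {D : ℤ}
    (hkron : (Odd p ∧ ¬ IsSquare (D : ZMod p)) ∨ (p = 2 ∧ D % 8 = 5)) :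
    ¬ IsSquare (D : ZMod (4 * p)) := by
  rcases hkron with ⟨-, hsq⟩ | ⟨rfl, hD⟩
  · intro h
    apply hsq
    simpa using h.map (ZMod.castHom (dvd_mul_left p 4) (ZMod p))
  · have hD' : (D : ZMod (4 * 2)) = (5 : ℤ) := (ZMod.intCast_eq_intCast_iff' _ _ _).2 hD
    rw [hD']
    decide

theorem rep_np_sq_of_kronecker_neg_one_general {n a b c : ℤ} {p : ℕ} (hp : p.Prime)
    (hkron : (Odd p ∧ ¬ IsSquare ((discrim a b c : ℤ) : ZMod p)) ∨
      (p = 2 ∧ discrim a b c % 8 = 5))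
    (hrep : ∃ x y : ℤ, a * x ^ 2 + b * x * y + c * y ^ 2 = n * (p : ℤ) ^ 2) :
    ∃ x y : ℤ, a * x ^ 2 + b * x * y + c * y ^ 2 = n := by
  obtain ⟨x, y, hxy⟩ := hrep
  have hdvd : (p : ℤ) ∣ a * x ^ 2 + b * x * y + c * y ^ 2 :=
    hxy ▸ (dvd_pow_self _ two_ne_zero).mul_left n
  obtain ⟨⟨u, rfl⟩, ⟨v, rfl⟩⟩ :=
    dvd_of_dvd_binary_quadratic hp (not_isSquare_zmod_four_mul_of_kronecker_neg_one hkron) hdvd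
  have hp2 : (p : ℤ) ^ 2 ≠ 0 := pow_ne_zero 2 (mod_cast hp.ne_zero)
  exact ⟨u, v, mul_right_cancel₀ hp2 (by linear_combination hxy)⟩

/-- For a primitive positive definite integral binary quadratic form `f`
of discriminant `D < 0` and a prime `p` with Kronecker symbol `(D/p) = -1`
(i.e. `p` odd and `D` a quadratic non-residue mod `p`, or `p = 2` and `D ≡ 5 (mod 8)`),
if `f` represents `n * p ^ 2` then `f` represents `n`. -/
theorem rep_np_sq_of_kronecker_neg_one (n : ℤ) (hn : 0 < n)
    (a b c : ℤ) (ha : 0 < a) (hprim : Int.gcd a (Int.gcd b c) = 1)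
    (D : ℤ) (hD : D = b ^ 2 - 4 * a * c) (hDneg : D < 0)
    (p : ℕ) (hp : p.Prime)
    (hkron : (Odd p ∧ ¬ IsSquare (D : ZMod p)) ∨ (p = 2 ∧ D % 8 = 5))
    (hrep : ∃ x y : ℤ, a * x ^ 2 + b * x * y + c * y ^ 2 = n * (p : ℤ) ^ 2) :
    ∃ x y : ℤ, a * x ^ 2 + b * x * y + c * y ^ 2 = n := by
  subst hD
  exact rep_np_sq_of_kronecker_neg_one_general hp hkron hrep
end

section
/- Let n be a positive integer and let f(x,y) = a x² + b x y + c y² be a primitive positive definite integral binary quadratic form of discriminant D = b² − 4ac < 0. Let p be a prime such that the Kronecker symbol (D/p) = 1 and p is represented by some primitive positive definite integral binary quadratic form g of discriminant D which is ambiguous, i.e., g is properly equivalent to its opposite g⁻(x,y) = g(x,−y). If f represents n p², then f represents n. -/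
/-- Two binary quadratic forms `(a,b,c)` and `(a',b',c')` are properly equivalent. -/
def ProperEquiv (a b c a' b' c' : ℤ) : Prop :=
  ∃ r s t u : ℤ, r * u - s * t = 1 ∧ ∀ x y : ℤ,
    a' * x ^ 2 + b' * x * y + c' * y ^ 2
      = a * (r * x + s * y) ^ 2 + b * (r * x + s * y) * (t * x + u * y)
          + c * (t * x + u * y) ^ 2

/-!
Let `z` satisfy `g z = p` and let `σ` be an automorphism of `g` of determinant `-1`. The polar value
`u` of `g` at `(z, σ z)` and the determinant `v = det (z, σ z)` satisfy `u² - D v² = 4 p²`. Since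
`σ` has trace zero, the quadratic form `det (z, σ z)` in `z` has resultant `-D` with `g`. A common
divisor `p` of their values would therefore divide `z`, contradicting `g z = p`. Hence `p ∤ v`, and
so `p ∤ u`: the pair `(u, v)` is an element `ε` of norm `p²` and trace `u` prime to `p` in the
quadratic order of discriminant `D`.

Multiplication by `ε` on the lattice of `f` is a matrix `A` with `f (A z) = p² f z`. When
`p² ∣ f z` and `p ∤ z`, the vector `z` is an eigenvector of `A` modulo `p²`, because
`det (z, A z)` is a multiple of `f z`. Its eigenvalue is a root of `l (l - u)` modulo `p²`, so
either `A z` or its conjugate `u z - A z` is divisible by `p²`, and dividing by `p²` turns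
`f z = n p²` into a representation of `n`.
-/

lemma pow_dvd_or_pow_dvd_of_not_dvd_sub {R : Type*} [CommRing R] [IsDomain R] {p a b : R} {e : ℕ}
    (hp : Prime p) (h : p ^ e ∣ a * b) (hab : ¬ p ∣ a - b) : p ^ e ∣ a ∨ p ^ e ∣ b := by
  by_cases ha : p ∣ a
  · exact .inl (hp.pow_dvd_of_dvd_mul_right e (fun hb ↦ hab (dvd_sub ha hb)) h)
  · exact .inr (hp.pow_dvd_of_dvd_mul_left e ha h)

lemma exists_dvd_sub_mul_of_dvd_det {R : Type*} [CommRing R] {m x y X Y : R}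
    (hxy : IsCoprime x m ∨ IsCoprime y m) (h : m ∣ x * Y - y * X) :
    ∃ l : R, m ∣ X - l * x ∧ m ∣ Y - l * y := by
  obtain ⟨d, hd⟩ := h
  rcases hxy with ⟨α, γ, hx⟩ | ⟨β, γ, hy⟩
  · exact ⟨α * X, ⟨γ * X, by linear_combination -X * hx⟩,
      ⟨γ * Y + α * d, by linear_combination α * hd - Y * hx⟩⟩
  · exact ⟨β * Y, ⟨γ * X - β * d, by linear_combination -β * hd - X * hy⟩,
      ⟨γ * Y, by linear_combination -Y * hy⟩⟩

open Polynomial in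
lemma dvd_of_sq_add_mul_mul_add_sq_mul_eq_zero {R : Type*} [CommRing R] [IsDomain R]
    [IsIntegrallyClosed R] {d m β γ : R} (hd : d ≠ 0)
    (h : m ^ 2 + d * β * m + d ^ 2 * γ = 0) : d ∣ m := by
  let φ := algebraMap R (FractionRing R)
  have hφ : Function.Injective φ := IsFractionRing.injective R (FractionRing R)
  have hφd : φ d ≠ 0 := (map_ne_zero_iff φ hφ).2 hd
  have hφh : φ m ^ 2 + φ d * φ β * φ m + φ d ^ 2 * φ γ = 0 := by simpa using congrArg φ h
  have hroot : (φ m / φ d) ^ 2 + φ β * (φ m / φ d) + φ γ = 0 := by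
    field_simp
    linear_combination hφh
  have hint : IsIntegral R (φ m / φ d) := by
    refine ⟨X ^ 2 + C β * X + C γ, by monicity!, ?_⟩
    simpa only [eval₂_add, eval₂_mul, eval₂_pow, eval₂_X, eval₂_C] using hroot
  obtain ⟨k, hk⟩ := IsIntegrallyClosed.isIntegral_iff.1 hint
  exact ⟨k, hφ (by rw [map_mul, ← mul_div_cancel₀ (φ m) hφd]; exact congrArg _ hk.symm)⟩

/-- The binary quadratic form `a x² + b x y + c y²`, encoded by its coefficients. -/
structure BinaryForm (R : Type*) where
  a : R
  b : R
  c : R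

namespace BinaryForm

section CommRing

variable {R : Type*} [CommRing R] (f g : BinaryForm R)

/-- The value `f(x, y)` of a binary quadratic form. -/
def eval (x y : R) : R :=
  f.a * x ^ 2 + f.b * x * y + f.c * y ^ 2

/-- The symmetric bilinear form whose value at `(z, z)` is `2 f(z)`, in coordinates. -/
def polar (x y x' y' : R) : R :=
  2 * f.a * x * x' + f.b * (x * y' + y * x') + 2 * f.c * y * y'

/-- The discriminant `b² - 4ac` of a binary quadratic form. -/
def discr : R :=
  f.b ^ 2 - 4 * f.a * f.c

/-- The Sylvester resultant of two binary quadratic forms. -/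
def resultant : R :=
  (f.a * g.c - f.c * g.a) ^ 2 - (f.a * g.b - f.b * g.a) * (f.b * g.c - f.c * g.b)

/-- The form `f` represents `n`. The vector `(x, y)` need not be primitive. -/
def Represents (n : R) : Prop :=
  ∃ x y : R, f.eval x y = n

/-- The matrix `!![r, s; t, w]` is an automorphism of `f` of determinant `-1`. -/
def IsImproperAutomorphism (r s t w : R) : Prop :=
  r * w - s * t = -1 ∧ ∀ x y : R, f.eval (r * x + s * y) (t * x + w * y) = f.eval x y

/-- Ambiguity of `f`, encoded as the existence of an improper automorphism. Composing with
`(x, y) ↦ (x, -y)` turns this into a proper equivalence of `f` with its opposite. -/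
def IsAmbiguous : Prop :=
  ∃ r s t w : R, f.IsImproperAutomorphism r s t w

/-- The norm of `k + v ω` in the quadratic order of discriminant `b² - 4ac` generated by a root `ω`
of `ω² - b ω + ac`. -/
def norm (k v : R) : R :=
  k ^ 2 + f.b * k * v + f.a * f.c * v ^ 2

variable {f g}

lemma eval_mul_mul (m x y : R) : f.eval (m * x) (m * y) = m ^ 2 * f.eval x y := by
  simp only [eval]
  ring

lemma polar_sq_sub_discr_mul_det_sq (x y x' y' : R) :
    f.polar x y x' y' ^ 2 - f.discr * (x * y' - y * x') ^ 2 =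
      4 * (f.eval x y * f.eval x' y') := by
  simp only [polar, discr, eval]
  ring

lemma resultant_mul_fst_pow (x y : R) :
    f.resultant g * x ^ 3 =
      (((f.a * g.c - f.c * g.a) * g.c - g.b * (f.b * g.c - f.c * g.b)) * x
        - g.c * (f.b * g.c - f.c * g.b) * y) * f.eval x y
      + ((f.b * (f.b * g.c - f.c * g.b) - f.c * (f.a * g.c - f.c * g.a)) * x
        + f.c * (f.b * g.c - f.c * g.b) * y) * g.eval x y := by
  simp only [resultant, eval]
  ring

lemma resultant_mul_snd_pow (x y : R) :
    f.resultant g * y ^ 3 =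
      ((g.b * (f.a * g.b - f.b * g.a) - g.a * (f.a * g.c - f.c * g.a)) * y
        + g.a * (f.a * g.b - f.b * g.a) * x) * f.eval x y
      + ((f.a * (f.a * g.c - f.c * g.a) - f.b * (f.a * g.b - f.b * g.a)) * y
        - f.a * (f.a * g.b - f.b * g.a) * x) * g.eval x y := by
  simp only [resultant, eval]
  ring

lemma dvd_and_dvd_of_not_dvd_resultant {p x y : R} (hp : Prime p) (hres : ¬ p ∣ f.resultant g)
    (hf : p ∣ f.eval x y) (hg : p ∣ g.eval x y) : p ∣ x ∧ p ∣ y := by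
  have hx : p ∣ f.resultant g * x ^ 3 :=
    resultant_mul_fst_pow x y ▸ dvd_add (hf.mul_left _) (hg.mul_left _)
  have hy : p ∣ f.resultant g * y ^ 3 :=
    resultant_mul_snd_pow x y ▸ dvd_add (hf.mul_left _) (hg.mul_left _)
  exact ⟨hp.dvd_of_dvd_pow ((hp.dvd_or_dvd hx).resolve_left hres),
    hp.dvd_of_dvd_pow ((hp.dvd_or_dvd hy).resolve_left hres)⟩

lemma not_dvd_and_dvd_of_eval_eq_prime [IsDomain R] {p x y : R} (hp : Prime p)
    (h : f.eval x y = p) : ¬ (p ∣ x ∧ p ∣ y) := by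
  rintro ⟨⟨x, rfl⟩, ⟨y, rfl⟩⟩
  have hsq : p * p ∣ p := ⟨f.eval x y, by rw [← pow_two, ← eval_mul_mul, h]⟩
  exact hp.not_isUnit (hp.irreducible.squarefree p hsq)

namespace IsImproperAutomorphism

variable [IsDomain R] [NeZero (2 : R)] {r s t w : R}

lemma coeff_eq (h : f.IsImproperAutomorphism r s t w) :
    f.a * r ^ 2 + f.b * r * t + f.c * t ^ 2 = f.a ∧
    f.a * r * s + f.b * s * t + f.c * t * w = f.b ∧
    f.a * s ^ 2 + f.b * s * w + f.c * w ^ 2 = f.c := by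
  obtain ⟨hdet, hf⟩ := h
  simp only [eval] at hf
  refine ⟨by linear_combination hf 1 0, ?_, by linear_combination hf 0 1⟩
  -- Polarization gives `2ars + b(rw + st) + 2ctw = b`, where `rw + st = 2st - 1`.
  apply mul_left_cancel₀ (two_ne_zero (α := R))
  linear_combination hf 1 1 - hf 1 0 - hf 0 1 - f.b * hdet

lemma a_mul_eq_b_mul_add_c_mul (h : f.IsImproperAutomorphism r s t w) :
    f.a * s = f.b * r + f.c * t := by
  obtain ⟨ha, hb, -⟩ := h.coeff_eq
  linear_combination r * hb - s * ha - f.c * t * h.1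

lemma mul_trace_eq_zero (h : f.IsImproperAutomorphism r s t w) :
    f.a * (r + w) = 0 ∧ f.b * (r + w) = 0 ∧ f.c * (r + w) = 0 := by
  obtain ⟨ha, hb, hc⟩ := h.coeff_eq
  have hdet := h.1
  refine ⟨?_, ?_, ?_⟩
  · linear_combination (f.a * r + f.b * t) * hdet - w * ha + t * hb
  · linear_combination t * hc - w * hb + f.a * s * hdet - h.a_mul_eq_b_mul_add_c_mul
  · linear_combination (f.c * w + f.b * s) * hdet - r * hc + s * hb

lemma resultant_eq_neg_discr (h : f.IsImproperAutomorphism r s t w) :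
    f.resultant ⟨t, w - r, -s⟩ = -f.discr := by
  obtain ⟨ha, hb, hc⟩ := h.mul_trace_eq_zero
  have hs := h.a_mul_eq_b_mul_add_c_mul
  have hdet := h.1
  simp only [resultant, discr]
  linear_combination (f.b ^ 2 - 4 * f.a * f.c) * hdet - f.b * r * hb
    + (f.b * s + f.c * (w - r)) * ha + (2 * f.a * r - f.b * t) * hc
    + (f.a * s - f.c * t - f.b * r) * hs

end IsImproperAutomorphism

lemma exists_not_dvd_sq_sub_discr_mul_sq [IsDomain R] [NeZero (2 : R)] {p : R} (hp : Prime p)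
    (hD : ¬ p ∣ f.discr) (hrep : f.Represents p) (hamb : f.IsAmbiguous) :
    ∃ u v : R, ¬ p ∣ u ∧ u ^ 2 - f.discr * v ^ 2 = 4 * p ^ 2 := by
  obtain ⟨x, y, hxy⟩ := hrep
  obtain ⟨r, s, t, w, hσ⟩ := hamb
  have hdet : x * (t * x + w * y) - y * (r * x + s * y) = eval ⟨t, w - r, -s⟩ x y := by
    simp only [eval]
    ring
  have huv := polar_sq_sub_discr_mul_det_sq (f := f) x y (r * x + s * y) (t * x + w * y)
  rw [hdet, hσ.2, hxy, ← pow_two] at huv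
  refine ⟨_, _, fun hu ↦ not_dvd_and_dvd_of_eval_eq_prime hp hxy ?_, huv⟩
  obtain ⟨q, hq⟩ := hu
  rw [hq] at huv
  have hDv : p ∣ f.discr * eval ⟨t, w - r, -s⟩ x y ^ 2 :=
    ⟨p * q ^ 2 - 4 * p, by linear_combination -huv⟩
  have hv : p ∣ eval ⟨t, w - r, -s⟩ x y := hp.dvd_of_dvd_pow ((hp.dvd_or_dvd hDv).resolve_left hD)
  refine dvd_and_dvd_of_not_dvd_resultant hp ?_ hxy.symm.dvd hv
  rwa [hσ.resultant_eq_neg_discr, dvd_neg]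

lemma exists_norm_eq_of_sq_sub_discr_mul_sq [IsDomain R] [IsIntegrallyClosed R] [NeZero (2 : R)]
    {u v m : R} (h : u ^ 2 - f.discr * v ^ 2 = 4 * m) :
    ∃ k : R, 2 * k + f.b * v = u ∧ f.norm k v = m := by
  simp only [discr] at h
  obtain ⟨k, hk⟩ : 2 ∣ u - f.b * v :=
    dvd_of_sq_add_mul_mul_add_sq_mul_eq_zero two_ne_zero (β := f.b * v)
      (γ := f.a * f.c * v ^ 2 - m) (by linear_combination h)
  obtain rfl : u = 2 * k + f.b * v := sub_eq_iff_eq_add.1 hk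
  refine ⟨k, rfl, mul_left_cancel₀ (mul_ne_zero two_ne_zero two_ne_zero : (2 * 2 : R) ≠ 0) ?_⟩
  simp only [norm]
  linear_combination h

/-- The substitution is multiplication by `k + v ω` on the lattice of `f`. -/
lemma eval_mul (k v x y : R) :
    f.eval (k * x - f.c * v * y) (f.a * v * x + (k + f.b * v) * y) =
      f.norm k v * f.eval x y := by
  simp only [eval, norm]
  ring

lemma norm_conj (k v : R) : f.norm (k + f.b * v) (-v) = f.norm k v := by
  simp only [norm]
  ring

lemma represents_of_eval_mul_mul [IsDomain R] {m n x y : R} (hm : m ≠ 0)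
    (h : f.eval (m * x) (m * y) = m ^ 2 * n) : f.Represents n :=
  ⟨x, y, mul_left_cancel₀ (pow_ne_zero 2 hm) (by rw [← eval_mul_mul, h])⟩

lemma represents_of_dvd_mul [IsDomain R] {m n k v x y : R} (hm : m ≠ 0) (hN : f.norm k v = m)
    (hxy : f.eval x y = n * m) (hX : m ∣ k * x - f.c * v * y)
    (hY : m ∣ f.a * v * x + (k + f.b * v) * y) : f.Represents n := by
  obtain ⟨X, hX⟩ := hX
  obtain ⟨Y, hY⟩ := hY
  refine represents_of_eval_mul_mul hm (x := X) (y := Y) ?_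
  rw [← hX, ← hY, eval_mul, hN, hxy]
  ring

lemma exists_dvd_mul_sub_smul_and_dvd_charpoly {m k v x y : R}
    (hxy : IsCoprime x m ∨ IsCoprime y m) (hN : m ∣ f.norm k v) (hf : m ∣ f.eval x y) :
    ∃ l : R, m ∣ k * x - f.c * v * y - l * x ∧ m ∣ f.a * v * x + (k + f.b * v) * y - l * y ∧
      m ∣ l * (l - (2 * k + f.b * v)) := by
  have hdet : m ∣ x * (f.a * v * x + (k + f.b * v) * y) - y * (k * x - f.c * v * y) := by
    convert hf.mul_left v using 1
    simp only [eval]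
    ring
  obtain ⟨l, hX, hY⟩ := exists_dvd_sub_mul_of_dvd_det hxy hdet
  refine ⟨l, hX, hY, ?_⟩
  obtain ⟨X, hX⟩ := hX
  obtain ⟨Y, hY⟩ := hY
  obtain ⟨N, hN⟩ := hN
  simp only [norm] at hN
  have hlx : m ∣ l * (l - (2 * k + f.b * v)) * x :=
    ⟨(k + f.b * v - l) * X + f.c * v * Y - N * x, by
      linear_combination (k + f.b * v - l) * hX + f.c * v * hY - x * hN⟩
  have hly : m ∣ l * (l - (2 * k + f.b * v)) * y :=
    ⟨(k - l) * Y - f.a * v * X - N * y, by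
      linear_combination (k - l) * hY - f.a * v * hX - y * hN⟩
  exact hxy.elim (·.symm.dvd_of_dvd_mul_right hlx) (·.symm.dvd_of_dvd_mul_right hly)

lemma exists_norm_eq_and_pow_dvd_mul [IsDomain R] {p k v x y : R} {e : ℕ} (hp : Prime p)
    (hxy : IsCoprime x (p ^ e) ∨ IsCoprime y (p ^ e)) (hN : p ^ e ∣ f.norm k v)
    (htr : ¬ p ∣ 2 * k + f.b * v) (hf : p ^ e ∣ f.eval x y) :
    ∃ k' v' : R, f.norm k' v' = f.norm k v ∧ p ^ e ∣ k' * x - f.c * v' * y ∧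
      p ^ e ∣ f.a * v' * x + (k' + f.b * v') * y := by
  obtain ⟨l, ⟨X, hX⟩, ⟨Y, hY⟩, hl⟩ := exists_dvd_mul_sub_smul_and_dvd_charpoly hxy hN hf
  rcases pow_dvd_or_pow_dvd_of_not_dvd_sub hp hl (by simpa using htr) with ⟨d, hd⟩ | ⟨d, hd⟩
  · exact ⟨k, v, rfl, ⟨X + d * x, by linear_combination hX + x * hd⟩,
      ⟨Y + d * y, by linear_combination hY + y * hd⟩⟩
  · exact ⟨k + f.b * v, -v, norm_conj k v, ⟨-X - d * x, by linear_combination -hX - x * hd⟩,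
      ⟨-Y - d * y, by linear_combination -hY - y * hd⟩⟩

lemma represents_of_represents_mul_prime_sq [IsDomain R] [IsBezout R] {p n k v : R} (hp : Prime p)
    (hN : f.norm k v = p ^ 2) (htr : ¬ p ∣ 2 * k + f.b * v) (hf : f.Represents (n * p ^ 2)) :
    f.Represents n := by
  have hp2 : p ^ 2 ≠ 0 := pow_ne_zero 2 hp.ne_zero
  have coprime_of_not_dvd {z : R} (hz : ¬ p ∣ z) : IsCoprime z (p ^ 2) :=
    (hp.irreducible.coprime_iff_not_dvd.2 hz).symm.pow_right
  obtain ⟨x, y, hxy⟩ := hf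
  by_cases hdvd : p ∣ x ∧ p ∣ y
  · obtain ⟨⟨x, rfl⟩, ⟨y, rfl⟩⟩ := hdvd
    exact represents_of_eval_mul_mul hp.ne_zero (hxy.trans (mul_comm _ _))
  · have hcop := (not_and_or.1 hdvd).imp coprime_of_not_dvd coprime_of_not_dvd
    obtain ⟨k', v', hN', hX, hY⟩ :=
      exists_norm_eq_and_pow_dvd_mul hp hcop hN.symm.dvd htr (hxy ▸ dvd_mul_left _ _)
    exact represents_of_dvd_mul hp2 (hN'.trans hN) hxy hX hY

end CommRing

lemma isAmbiguous_of_properEquiv {a b c : ℤ} (h : ProperEquiv a b c a (-b) c) :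
    IsAmbiguous ⟨a, b, c⟩ := by
  obtain ⟨r, s, t, w, hdet, h⟩ := h
  refine ⟨r, -s, t, -w, by linear_combination -hdet, fun x y ↦ ?_⟩
  simp only [eval]
  linear_combination -h x (-y)

end BinaryForm

open BinaryForm in
theorem rep_np_sq_of_ambiguous_general {R : Type*} [CommRing R] [IsDomain R] [IsBezout R]
    [NeZero (2 : R)] {f g : BinaryForm R} {n p : R} (hp : Prime p) (hdiscr : g.discr = f.discr)
    (hD : ¬ p ∣ f.discr) (hamb : g.IsAmbiguous) (hg : g.Represents p)
    (hf : f.Represents (n * p ^ 2)) : f.Represents n := by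
  classical
  let := IsBezout.toGCDDomain R
  obtain ⟨u, v, hu, huv⟩ := exists_not_dvd_sq_sub_discr_mul_sq hp (hdiscr ▸ hD) hg hamb
  rw [hdiscr] at huv
  obtain ⟨k, hk, hN⟩ := exists_norm_eq_of_sq_sub_discr_mul_sq huv
  exact represents_of_represents_mul_prime_sq hp hN (hk ▸ hu) hf

/-- For a primitive positive definite integral binary quadratic form `f`
of discriminant `D < 0` and a prime `p` with `(D/p) = 1` which is represented by some
ambiguous primitive positive definite form of discriminant `D`, if `f` represents
`n * p ^ 2` then `f` represents `n`. -/
theorem rep_np_sq_of_ambiguous (n : ℤ) (hn : 0 < n)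
    (a b c : ℤ) (ha : 0 < a) (hprim : Int.gcd a (Int.gcd b c) = 1)
    (D : ℤ) (hD : D = b ^ 2 - 4 * a * c) (hDneg : D < 0)
    (p : ℕ) (hp : p.Prime)
    (hkron : (Odd p ∧ ¬ (p : ℤ) ∣ D ∧ IsSquare (D : ZMod p)) ∨ (p = 2 ∧ D % 8 = 1))
    (hamb : ∃ a' b' c' : ℤ, 0 < a' ∧ Int.gcd a' (Int.gcd b' c') = 1 ∧
      b' ^ 2 - 4 * a' * c' = D ∧
      (∃ x y : ℤ, a' * x ^ 2 + b' * x * y + c' * y ^ 2 = (p : ℤ)) ∧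
      ProperEquiv a' b' c' a' (-b') c')
    (hrep : ∃ x y : ℤ, a * x ^ 2 + b * x * y + c * y ^ 2 = n * (p : ℤ) ^ 2) :
    ∃ x y : ℤ, a * x ^ 2 + b * x * y + c * y ^ 2 = n := by
  subst hD
  have hpD : ¬ (p : ℤ) ∣ b ^ 2 - 4 * a * c := hkron.elim (·.2.1) (by rintro ⟨rfl, h⟩; omega)
  obtain ⟨a', b', c', -, -, hD', hp_rep, hequiv⟩ := hamb
  exact rep_np_sq_of_ambiguous_general (f := ⟨a, b, c⟩) (g := ⟨a', b', c'⟩)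
    (Nat.prime_iff_prime_int.1 hp) hD' hpD (BinaryForm.isAmbiguous_of_properEquiv hequiv)
    hp_rep hrep
end

section
/- Let n be a positive integer and let D be a negative integer with D ≡ 0 or 1 (mod 4) and gcd(n, D) = 1. Then the following are equivalent: (1) no primitive positive definite integral binary quadratic form of discriminant D represents n; (2) there is a prime p dividing n to an odd power (i.e., a prime p dividing the squarefree part of n) such that the Kronecker symbol (D/p) = −1, i.e., either p is odd and D is a quadratic non-residue modulo p, or p = 2 and D ≡ 5 (mod 8). -/
/-!
Completing a coprime pair `(x, y)` to a matrix in `SL₂` shows that a value `N = f(x, y)` is the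
leading coefficient of a form equivalent to `f`, so the discriminant of `f` is a square modulo
`4N`. Conversely, `b ^ 2 - 4 * m * c = D` says that the form `(m, b, c)` has discriminant `D` and
represents `m`, hence also every `k ^ 2 * m`. Dividing `x` and `y` by their gcd changes `n` by a
square factor only, so everything depends on the primes dividing `n` to an odd power, and by the
Chinese remainder theorem on whether `D` is a square modulo `4p` for each of them. Working modulo
`4p` rather than `p` treats `p = 2` and odd `p` alike.
-/

section SquaresModulo

variable {D : ℤ} {k m n p : ℕ}

lemma isSquare_intCast_zmod_iff : IsSquare (D : ZMod n) ↔ ∃ r : ℤ, (n : ℤ) ∣ r ^ 2 - D := by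
  rw [isSquare_iff_exists_sq, ZMod.intCast_surjective.exists]
  simp only [← Int.cast_pow, ZMod.intCast_eq_intCast_iff_dvd_sub]

lemma isSquare_intCast_zmod_of_dvd (hmn : m ∣ n) (h : IsSquare (D : ZMod n)) :
    IsSquare (D : ZMod m) := by
  simpa only [map_intCast] using h.map (ZMod.castHom hmn (ZMod m))

lemma isSquare_intCast_zmod_mul_iff (hmn : m.Coprime n) :
    IsSquare (D : ZMod (m * n)) ↔ IsSquare (D : ZMod m) ∧ IsSquare (D : ZMod n) := by
  refine ⟨fun h ↦ ⟨isSquare_intCast_zmod_of_dvd (dvd_mul_right m n) h,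
    isSquare_intCast_zmod_of_dvd (dvd_mul_left n m) h⟩, ?_⟩
  rintro ⟨⟨r, hr⟩, ⟨s, hs⟩⟩
  have hsq : IsSquare (D : ZMod m × ZMod n) := ⟨(r, s), Prod.ext hr hs⟩
  simpa only [map_intCast] using hsq.map (ZMod.chineseRemainder hmn).symm

lemma isSquare_intCast_zmod_mul_of_squarefree (hk : k ≠ 0) (hm : Squarefree m)
    (hDk : IsSquare (D : ZMod k))
    (hD : ∀ p : ℕ, p.Prime → p ∣ m → IsSquare (D : ZMod (k * p))) :
    IsSquare (D : ZMod (k * m)) := by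
  induction m using induction_on_primes with
  | zero => exact absurd hm not_squarefree_zero
  | one => rwa [mul_one]
  | prime_mul p m hp ih =>
    have hDm : IsSquare (D : ZMod (k * m)) :=
      ih hm.of_mul_right fun q hq hqm ↦ hD q hq (hqm.mul_left p)
    obtain ⟨e, k', hpk', rfl⟩ := Nat.exists_eq_pow_mul_and_not_dvd hk p hp.ne_one
    have hcop : (p ^ (e + 1)).Coprime (k' * m) :=
      (((hp.coprime_iff_not_dvd).2 hpk').mul_right (Nat.coprime_of_squarefree_mul hm)).pow_left _
    have hsplit : p ^ e * k' * (p * m) = p ^ (e + 1) * (k' * m) := by ring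
    rw [hsplit, isSquare_intCast_zmod_mul_iff hcop]
    exact ⟨isSquare_intCast_zmod_of_dvd ⟨k', by ring⟩ (hD p hp (dvd_mul_right p m)),
      isSquare_intCast_zmod_of_dvd ⟨p ^ e, by ring⟩ hDm⟩

lemma isSquare_intCast_zmod_four_iff : IsSquare (D : ZMod 4) ↔ D % 4 = 0 ∨ D % 4 = 1 := by
  have hres : D % 4 = 0 ∨ D % 4 = 1 ∨ D % 4 = 2 ∨ D % 4 = 3 := by omega
  rw [← ZMod.intCast_mod D 4]
  rcases hres with h | h | h | h <;> simp only [Nat.cast_ofNat, h] <;> decide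

lemma isSquare_intCast_zmod_eight_iff :
    IsSquare (D : ZMod 8) ↔ D % 8 = 0 ∨ D % 8 = 1 ∨ D % 8 = 4 := by
  have hres : D % 8 = 0 ∨ D % 8 = 1 ∨ D % 8 = 2 ∨ D % 8 = 3 ∨
      D % 8 = 4 ∨ D % 8 = 5 ∨ D % 8 = 6 ∨ D % 8 = 7 := by omega
  rw [← ZMod.intCast_mod D 8]
  rcases hres with h | h | h | h | h | h | h | h <;> simp only [Nat.cast_ofNat, h] <;> decide

lemma not_isSquare_intCast_zmod_four_mul_prime_iff (hD : D % 4 = 0 ∨ D % 4 = 1) (hp : p.Prime) :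
    ¬IsSquare (D : ZMod (4 * p)) ↔
      (Odd p ∧ ¬IsSquare (D : ZMod p)) ∨ (p = 2 ∧ D % 8 = 5) := by
  rcases hp.eq_two_or_odd' with rfl | hodd
  · have htwo : ¬Odd 2 := by decide
    simp only [htwo, false_and, false_or, true_and, Nat.reduceMul, isSquare_intCast_zmod_eight_iff]
    omega
  · have hcop : Nat.Coprime 4 p := (Nat.coprime_two_left.2 hodd).pow_left 2
    have hne : p ≠ 2 := by rintro rfl; exact absurd hodd (by decide)
    simp only [isSquare_intCast_zmod_mul_iff hcop, isSquare_intCast_zmod_four_iff.2 hD, hodd, hne,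
      true_and, false_and, or_false]

end SquaresModulo

lemma odd_factorization_sq_mul_iff {k : ℕ} (hk : k ≠ 0) (m p : ℕ) :
    Odd ((k ^ 2 * m).factorization p) ↔ Odd (m.factorization p) := by
  rcases eq_or_ne m 0 with rfl | hm
  · rw [mul_zero]
  · simp only [Nat.factorization_mul (pow_ne_zero 2 hk) hm, Nat.factorization_pow,
      Finsupp.add_apply, Finsupp.smul_apply, smul_eq_mul, Nat.odd_add', even_two_mul, iff_true]

lemma exists_sq_sub_four_mul_eq_discrim {R : Type*} [CommRing R] (a b c : R) {x y : R}
    (hxy : IsCoprime x y) :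
    ∃ B C : R, B ^ 2 - 4 * (a * x ^ 2 + b * x * y + c * y ^ 2) * C = discrim a b c := by
  obtain ⟨u, v, huv⟩ := hxy
  -- the remaining coefficients after the substitution with columns `(x, y)` and `(-v, u)`
  refine ⟨-2 * a * x * v + b * (u * x - v * y) + 2 * c * y * u,
    a * v ^ 2 - b * v * u + c * u ^ 2, ?_⟩
  rw [discrim]
  linear_combination (b ^ 2 - 4 * a * c) * (u * x + v * y + 1) * huv

lemma isSquare_discrim_zmod_four_mul_of_odd_factorization {a b c x y : ℤ} {n p : ℕ}
    (hn : a * x ^ 2 + b * x * y + c * y ^ 2 = n) (hp : Odd (n.factorization p)) :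
    IsSquare ((discrim a b c : ℤ) : ZMod (4 * p)) := by
  have hn0 : n ≠ 0 := by rintro rfl; simp at hp
  have hgcd : 0 < x.gcd y := by
    rw [Int.gcd_pos_iff]
    by_contra! hxy
    obtain ⟨rfl, rfl⟩ := hxy
    exact hn0 (by simpa using hn.symm)
  obtain ⟨x', y', hcop, hx, hy⟩ := Int.exists_gcd_one hgcd
  set g := x.gcd y
  set N := a * x' ^ 2 + b * x' * y' + c * y' ^ 2
  have hnN : (n : ℤ) = g ^ 2 * N := by rw [← hn, hx, hy]; ring
  have hnN' : n = g ^ 2 * N.natAbs := by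
    rw [← Int.natAbs_natCast n, hnN, Int.natAbs_mul, Int.natAbs_pow, Int.natAbs_natCast]
  rw [hnN', odd_factorization_sq_mul_iff hgcd.ne'] at hp
  have hpN : (p : ℤ) ∣ N := Int.natCast_dvd.2 (Nat.dvd_of_factorization_pos hp.pos.ne')
  obtain ⟨B, C, hBC⟩ :=
    exists_sq_sub_four_mul_eq_discrim a b c (Int.isCoprime_iff_gcd_eq_one.2 hcop)
  refine isSquare_intCast_zmod_iff.2 ⟨B, ?_⟩
  have h4N : B ^ 2 - discrim a b c = 4 * N * C := by rw [← hBC]; ring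
  rw [h4N, Nat.cast_mul]
  exact (mul_dvd_mul_left 4 hpN).mul_right C

lemma gcd_eq_one_of_isCoprime_discrim {a b c : ℤ} (h : IsCoprime a (discrim a b c)) :
    Int.gcd a (Int.gcd b c) = 1 := by
  have hab : IsCoprime a b := by
    have hsq : IsCoprime a (b ^ 2 - a * (4 * c)) := by
      convert h using 1; rw [discrim]; ring
    exact (IsCoprime.pow_right_iff two_pos).1 (IsCoprime.sub_mul_left_right_iff.1 hsq)
  rw [← Int.gcd_assoc, Int.isCoprime_iff_gcd_eq_one.1 hab, Nat.cast_one, Int.one_gcd]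

lemma exists_primitive_form_of_isSquare {D : ℤ} {m : ℕ} (hcop : IsCoprime (m : ℤ) D)
    (hD : IsSquare (D : ZMod (4 * m))) :
    ∃ b c : ℤ, Int.gcd m (Int.gcd b c) = 1 ∧ discrim (m : ℤ) b c = D := by
  obtain ⟨b, c, hbc⟩ := isSquare_intCast_zmod_iff.1 hD
  have hdisc : discrim (m : ℤ) b c = D := by
    rw [discrim]
    push_cast at hbc
    linear_combination hbc
  exact ⟨b, c, gcd_eq_one_of_isCoprime_discrim (hdisc ▸ hcop), hdisc⟩

theorem exists_primitive_form_rep_iff_forall_isSquare {n : ℕ} (hn : 0 < n) {D : ℤ}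
    (hDmod : D % 4 = 0 ∨ D % 4 = 1) (hcop : Int.gcd (n : ℤ) D = 1) :
    (∃ a b c x y : ℤ, 0 < a ∧ Int.gcd a (Int.gcd b c) = 1 ∧
        b ^ 2 - 4 * a * c = D ∧ a * x ^ 2 + b * x * y + c * y ^ 2 = (n : ℤ)) ↔
      ∀ p : ℕ, p.Prime → Odd (n.factorization p) → IsSquare (D : ZMod (4 * p)) := by
  constructor
  · rintro ⟨a, b, c, x, y, -, -, rfl, hxy⟩ p - hp
    exact isSquare_discrim_zmod_four_mul_of_odd_factorization hxy hp
  · intro hD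
    obtain ⟨m, k, rfl, hm⟩ := Nat.sq_mul_squarefree n
    have hk : k ≠ 0 := by rintro rfl; simp at hn
    have hDm : IsSquare (D : ZMod (4 * m)) := by
      refine isSquare_intCast_zmod_mul_of_squarefree four_ne_zero hm
        (isSquare_intCast_zmod_four_iff.2 hDmod) fun p hp hpm ↦ hD p hp ?_
      rw [odd_factorization_sq_mul_iff hk, Nat.factorization_eq_one_of_squarefree hm hp hpm]
      exact odd_one
    have hcopm : IsCoprime (m : ℤ) D := by
      refine (Int.isCoprime_iff_gcd_eq_one.2 hcop).of_isCoprime_of_dvd_left ?_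
      exact_mod_cast dvd_mul_left m (k ^ 2)
    obtain ⟨b, c, hprim, hdisc⟩ := exists_primitive_form_of_isSquare hcopm hDm
    refine ⟨m, b, c, k, 0, by exact_mod_cast hm.ne_zero.bot_lt, hprim, hdisc, ?_⟩
    push_cast
    ring

theorem not_rep_iff_exists_bad_prime_general (n : ℕ) (hn : 0 < n)
    (D : ℤ) (hDmod : D % 4 = 0 ∨ D % 4 = 1) (hcop : Int.gcd (n : ℤ) D = 1) :
    (¬ ∃ a b c x y : ℤ, 0 < a ∧ Int.gcd a (Int.gcd b c) = 1 ∧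
        b ^ 2 - 4 * a * c = D ∧ a * x ^ 2 + b * x * y + c * y ^ 2 = (n : ℤ)) ↔
      (∃ p : ℕ, p.Prime ∧ Odd (n.factorization p) ∧
        ((Odd p ∧ ¬ IsSquare (D : ZMod p)) ∨ (p = 2 ∧ D % 8 = 5))) := by
  rw [exists_primitive_form_rep_iff_forall_isSquare hn hDmod hcop]
  push Not
  exact exists_congr fun p ↦ and_congr_right fun hp ↦ and_congr_right fun _ ↦
    not_isSquare_intCast_zmod_four_mul_prime_iff hDmod hp

/-- For `D < 0` with `D ≡ 0, 1 (mod 4)` and `gcd(n, D) = 1`, no primitive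
positive definite integral binary quadratic form of discriminant `D` represents `n`
if and only if there is a prime `p` dividing `n` to an odd power with `(D/p) = -1`. -/
theorem not_rep_iff_exists_bad_prime (n : ℕ) (hn : 0 < n)
    (D : ℤ) (hDneg : D < 0) (hDmod : D % 4 = 0 ∨ D % 4 = 1)
    (hcop : Int.gcd (n : ℤ) D = 1) :
    (¬ ∃ a b c x y : ℤ, 0 < a ∧ Int.gcd a (Int.gcd b c) = 1 ∧
        b ^ 2 - 4 * a * c = D ∧ a * x ^ 2 + b * x * y + c * y ^ 2 = (n : ℤ)) ↔
      (∃ p : ℕ, p.Prime ∧ Odd (n.factorization p) ∧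
        ((Odd p ∧ ¬ IsSquare (D : ZMod p)) ∨ (p = 2 ∧ D % 8 = 5))) :=
  not_rep_iff_exists_bad_prime_general n hn D hDmod hcop
end

section
/- Let D be a negative integer with D ≡ 0 or 1 (mod 4) and let n be a positive integer with gcd(n, D) = 1. If n is not represented by any primitive positive definite integral binary quadratic form of discriminant D, then for every prime p, the integer n p² is also not represented by any primitive positive definite integral binary quadratic form of discriminant D. -/
/-!
If `f(x, y) = n m²` and `g = gcd(x, y)`, then `f` takes the value `N = n m² / g²` at a pair of
coprime arguments, so some form of discriminant `D` has leading coefficient `N`. Cancelling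
`gcd(g, m)²` in `g² N = n m²` leaves coprime squares `g'²` and `m'²`, so `N = k m'²` and
`n = k g'²`. The factor `m'²` can be moved from the leading to the last coefficient, as the
discriminant depends only on their product. The resulting form has leading coefficient `k`, hence
takes the value `n` at `(g', 0)`; it is primitive because `k` divides `n`, which is coprime to `D`.
-/

theorem exists_eq_mul_sq_of_sq_mul_eq_mul_sq {M : Type*} [CommMonoidWithZero M]
    [GCDMonoid M] {g N n m : M} (hm : m ≠ 0) (h : g ^ 2 * N = n * m ^ 2) :
    ∃ k g' m' : M, N = k * m' ^ 2 ∧ n = k * g' ^ 2 := by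
  obtain ⟨g', m', hg, hm', hunit⟩ := extract_gcd g m
  have hd : gcd g m ≠ 0 := fun h0 ↦ hm ((gcd_eq_zero_iff g m).mp h0).2
  have hm'0 : m' ≠ 0 := by
    rintro rfl
    exact hm (by rw [hm', mul_zero])
  have hreduced : g' ^ 2 * N = n * m' ^ 2 := by
    refine mul_left_cancel₀ (pow_ne_zero 2 hd) ?_
    calc gcd g m ^ 2 * (g' ^ 2 * N) = (gcd g m * g') ^ 2 * N := by rw [mul_pow, mul_assoc]
      _ = n * (gcd g m * m') ^ 2 := by rw [← hg, ← hm', h]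
      _ = gcd g m ^ 2 * (n * m' ^ 2) := by rw [mul_pow, mul_left_comm]
  have hrel : IsRelPrime (m' ^ 2) (g' ^ 2) := (gcd_isUnit_iff_isRelPrime.mp hunit).symm.pow
  obtain ⟨k, rfl⟩ : m' ^ 2 ∣ N := hrel.dvd_of_dvd_mul_left ⟨n, hreduced.trans (mul_comm _ _)⟩
  refine ⟨k, g', m', mul_comm _ _, mul_right_cancel₀ (pow_ne_zero 2 hm'0) ?_⟩
  rw [← hreduced, mul_comm (m' ^ 2), ← mul_assoc, mul_comm k]

theorem exists_isCoprime_eq_mul {R : Type*} [CommRing R] [IsDomain R] [IsBezout R] [GCDMonoid R]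
    (x y : R) : ∃ g x' y' : R, IsCoprime x' y' ∧ x = g * x' ∧ y = g * y' := by
  obtain ⟨x', y', hx, hy, hunit⟩ := extract_gcd x y
  exact ⟨gcd x y, x', y', (gcd_isUnit_iff x' y').mp hunit, hx, hy⟩

/-- The binary quadratic form `a x² + b x y + c y²`, given by its coefficients. Degenerate and
indefinite forms are allowed. -/
structure BinaryQuadraticForm (R : Type*) where
  a : R
  b : R
  c : R

namespace BinaryQuadraticForm

section CommRing

variable {R : Type*} [CommRing R]

/-- The discriminant of a binary quadratic form, an invariant under unimodular substitutions. -/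
def disc (f : BinaryQuadraticForm R) : R := f.b ^ 2 - 4 * f.a * f.c

/-- The value of a binary quadratic form at `(x, y)`; `f` represents `n` if `f.eval x y = n` for
some `x` and `y`. -/
def eval (f : BinaryQuadraticForm R) (x y : R) : R := f.a * x ^ 2 + f.b * x * y + f.c * y ^ 2

/-- The form `f (p X + q Y, r X + s Y)` obtained from `f` by the linear substitution with matrix
`!![p, q; r, s]`. -/
def subst (f : BinaryQuadraticForm R) (p q r s : R) : BinaryQuadraticForm R where
  a := f.eval p r
  b := 2 * f.a * p * q + f.b * (p * s + q * r) + 2 * f.c * r * s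
  c := f.eval q s

theorem disc_subst (f : BinaryQuadraticForm R) (p q r s : R) :
    (f.subst p q r s).disc = (p * s - q * r) ^ 2 * f.disc := by
  simp only [disc, subst, eval]
  ring

theorem eval_mul_mul (f : BinaryQuadraticForm R) (g x y : R) :
    f.eval (g * x) (g * y) = g ^ 2 * f.eval x y := by
  simp only [eval]
  ring

theorem eval_zero_right (f : BinaryQuadraticForm R) (x : R) : f.eval x 0 = f.a * x ^ 2 := by
  simp [eval]

theorem exists_disc_eq_and_a_eq_eval (f : BinaryQuadraticForm R) {x y : R} (h : IsCoprime x y) :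
    ∃ F : BinaryQuadraticForm R, F.disc = f.disc ∧ F.a = f.eval x y := by
  obtain ⟨u, v, huv⟩ := h
  have hdet : x * u - -v * y = 1 := by linear_combination huv
  exact ⟨f.subst x (-v) y u, by rw [disc_subst, hdet, one_pow, one_mul], rfl⟩

theorem exists_disc_eq_and_a_eq_of_a_eq_mul (f : BinaryQuadraticForm R) {k l : R}
    (h : f.a = k * l) : ∃ F : BinaryQuadraticForm R, F.disc = f.disc ∧ F.a = k := by
  refine ⟨⟨k, f.b, l * f.c⟩, ?_, rfl⟩
  simp only [disc, h]
  ring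

theorem isCoprime_a_b_of_isCoprime_a_disc {f : BinaryQuadraticForm R} (h : IsCoprime f.a f.disc) :
    IsCoprime f.a f.b := by
  have hsq : f.b ^ 2 = f.disc + f.a * (4 * f.c) := by
    rw [disc]
    ring
  rw [← IsCoprime.pow_right_iff two_pos, hsq]
  exact h.add_mul_left_right _

theorem exists_disc_eq_and_eq_a_mul_sq [IsDomain R] [IsBezout R] [GCDMonoid R]
    (f : BinaryQuadraticForm R) {n m x y : R} (hm : m ≠ 0) (h : f.eval x y = n * m ^ 2) :
    ∃ (F : BinaryQuadraticForm R) (z : R), F.disc = f.disc ∧ n = F.a * z ^ 2 := by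
  obtain ⟨g, x', y', hcop, rfl, rfl⟩ := exists_isCoprime_eq_mul x y
  rw [eval_mul_mul] at h
  obtain ⟨k, z, m', hN, hn⟩ := exists_eq_mul_sq_of_sq_mul_eq_mul_sq hm h
  obtain ⟨F₁, hdisc₁, ha₁⟩ := f.exists_disc_eq_and_a_eq_eval hcop
  obtain ⟨F, hdisc, rfl⟩ := F₁.exists_disc_eq_and_a_eq_of_a_eq_mul (ha₁.trans hN)
  exact ⟨F, z, hdisc.trans hdisc₁, hn⟩

end CommRing

/-- An integral binary quadratic form is primitive if its three coefficients have no common factor,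
expressed by the nested gcd `gcd(a, gcd(b, c)) = 1`. -/
def IsPrimitive (f : BinaryQuadraticForm ℤ) : Prop := Int.gcd f.a (Int.gcd f.b f.c) = 1

theorem isPrimitive_of_isCoprime_a_disc {f : BinaryQuadraticForm ℤ} (h : IsCoprime f.a f.disc) :
    f.IsPrimitive := by
  have hab : Int.gcd f.a f.b = 1 :=
    Int.isCoprime_iff_gcd_eq_one.mp (isCoprime_a_b_of_isCoprime_a_disc h)
  rw [IsPrimitive, ← Int.gcd_assoc, hab, Nat.cast_one, Int.one_gcd]

end BinaryQuadraticForm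

theorem not_rep_np_sq_of_not_rep_general {D n : ℤ} (hn : 0 < n) (hcop : IsCoprime n D)
    (hnrep : ¬ ∃ (f : BinaryQuadraticForm ℤ) (x y : ℤ),
      0 < f.a ∧ f.IsPrimitive ∧ f.disc = D ∧ f.eval x y = n)
    {m : ℤ} (hm : m ≠ 0) :
    ¬ ∃ (f : BinaryQuadraticForm ℤ) (x y : ℤ), f.disc = D ∧ f.eval x y = n * m ^ 2 := by
  rintro ⟨f, x, y, rfl, hf⟩
  obtain ⟨F, z, hdisc, rfl⟩ := f.exists_disc_eq_and_eq_a_mul_sq hm hf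
  have hpos : 0 < F.a := pos_of_mul_pos_left hn (sq_nonneg z)
  have hprim : F.IsPrimitive := by
    rw [← hdisc] at hcop
    exact BinaryQuadraticForm.isPrimitive_of_isCoprime_a_disc hcop.of_mul_left_left
  exact hnrep ⟨F, z, 0, hpos, hprim, hdisc, F.eval_zero_right z⟩

/-- For `D < 0` with `D ≡ 0, 1 (mod 4)` and `gcd(n, D) = 1`, if `n` is not
represented by any primitive positive definite integral binary quadratic form of
discriminant `D`, then neither is `n * p ^ 2` for any prime `p`. -/
theorem not_rep_np_sq_of_not_rep (D : ℤ) (hDneg : D < 0) (hDmod : D % 4 = 0 ∨ D % 4 = 1)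
    (n : ℕ) (hn : 0 < n) (hcop : Int.gcd (n : ℤ) D = 1)
    (hnrep : ¬ ∃ a b c x y : ℤ, 0 < a ∧ Int.gcd a (Int.gcd b c) = 1 ∧
        b ^ 2 - 4 * a * c = D ∧ a * x ^ 2 + b * x * y + c * y ^ 2 = (n : ℤ)) :
    ∀ p : ℕ, p.Prime →
      ¬ ∃ a b c x y : ℤ, 0 < a ∧ Int.gcd a (Int.gcd b c) = 1 ∧
          b ^ 2 - 4 * a * c = D ∧ a * x ^ 2 + b * x * y + c * y ^ 2 = (n : ℤ) * (p : ℤ) ^ 2 := by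
  rintro p hp ⟨a, b, c, x, y, -, -, hdisc, hrep⟩
  exact not_rep_np_sq_of_not_rep_general (Int.natCast_pos.mpr hn)
    (Int.isCoprime_iff_gcd_eq_one.mpr hcop)
    (fun ⟨f, u, v, hf⟩ ↦ hnrep ⟨f.a, f.b, f.c, u, v, hf⟩)
    (Int.natCast_ne_zero.mpr hp.ne_zero) ⟨⟨a, b, c⟩, x, y, hdisc, hrep⟩
end

section
/- Let D be a negative integer with D ≡ 0 or 1 (mod 4) and let p be a prime dividing D. If g is a primitive positive definite integral binary quadratic form of discriminant D that represents p, then g is ambiguous; that is, g is properly equivalent to its opposite g⁻(x,y) = g(x,−y). -/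
/-! A squarefree value `n` is only taken at coprime arguments, so it can be made the leading
coefficient of a properly equivalent form `(n, B, C)`. If `n` divides the discriminant
`B ^ 2 - 4 * n * C`, it divides `B ^ 2`, hence `B`. The shear `x ↦ x - (B / n) * y` then carries
`(n, B, C)` to its opposite, and ambiguity is invariant under proper equivalence. -/

/-- The form `(a,b,c)` is ambiguous: it is properly equivalent to its opposite `(a,-b,c)`. For
a primitive form this says that its proper equivalence class has order at most two. -/
def IsAmbiguous (a b c : ℤ) : Prop :=
  ProperEquiv a b c a (-b) c

section

variable {a b c a' b' c' a'' b'' c'' : ℤ}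

namespace ProperEquiv

theorem symm (h : ProperEquiv a b c a' b' c') : ProperEquiv a' b' c' a b c := by
  obtain ⟨r, s, t, u, hdet, h⟩ := h
  refine ⟨u, -s, -t, r, by linear_combination hdet, fun x y ↦ ?_⟩
  have hx : r * (u * x + -s * y) + s * (-t * x + r * y) = x := by linear_combination x * hdet
  have hy : t * (u * x + -s * y) + u * (-t * x + r * y) = y := by linear_combination y * hdet
  rw [h, hx, hy]

theorem trans (h : ProperEquiv a b c a' b' c') (h' : ProperEquiv a' b' c' a'' b'' c'') :
    ProperEquiv a b c a'' b'' c'' := by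
  obtain ⟨r, s, t, u, hdet, h⟩ := h
  obtain ⟨r', s', t', u', hdet', h'⟩ := h'
  refine ⟨r * r' + s * t', r * s' + s * u', t * r' + u * t', t * s' + u * u', ?_, fun x y ↦ ?_⟩
  · linear_combination (r' * u' - s' * t') * hdet + hdet'
  · rw [h', h]
    ring

theorem opposite (h : ProperEquiv a b c a' b' c') : ProperEquiv a (-b) c a' (-b') c' := by
  obtain ⟨r, s, t, u, hdet, h⟩ := h
  refine ⟨r, -s, -t, u, by linear_combination hdet, fun x y ↦ ?_⟩
  linear_combination h x (-y)

theorem disc_eq (h : ProperEquiv a b c a' b' c') :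
    b' ^ 2 - 4 * a' * c' = b ^ 2 - 4 * a * c := by
  obtain ⟨r, s, t, u, hdet, h⟩ := h
  have ha : a' = a * r ^ 2 + b * r * t + c * t ^ 2 := by linear_combination h 1 0
  have hc : c' = a * s ^ 2 + b * s * u + c * u ^ 2 := by linear_combination h 0 1
  have hb : b' = 2 * a * r * s + b * (r * u + s * t) + 2 * c * t * u := by
    linear_combination h 1 1 - h 1 0 - h 0 1
  calc b' ^ 2 - 4 * a' * c' = (r * u - s * t) ^ 2 * (b ^ 2 - 4 * a * c) := by
        rw [ha, hb, hc]
        ring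
    _ = b ^ 2 - 4 * a * c := by rw [hdet, one_pow, one_mul]

end ProperEquiv

theorem IsAmbiguous.of_properEquiv (hamb : IsAmbiguous a' b' c')
    (h : ProperEquiv a b c a' b' c') : IsAmbiguous a b c :=
  (h.trans hamb).trans h.symm.opposite

theorem isAmbiguous_of_dvd (h : a ∣ b) : IsAmbiguous a b c := by
  obtain ⟨k, rfl⟩ := h
  exact ⟨1, -k, 0, 1, by ring, fun x y ↦ by ring⟩

theorem isAmbiguous_of_squarefree_dvd_disc (ha : Squarefree a) (h : a ∣ b ^ 2 - 4 * a * c) :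
    IsAmbiguous a b c := by
  have hac : a ∣ 4 * a * c := (dvd_mul_left a 4).mul_right c
  have hsq : a ∣ b ^ 2 := (dvd_sub_left hac).mp h
  exact isAmbiguous_of_dvd (ha.isRadical 2 b hsq)

end

theorem exists_properEquiv_of_isCoprime (a b c : ℤ) {r t : ℤ} (h : IsCoprime r t) :
    ∃ b' c' : ℤ, ProperEquiv a b c (a * r ^ 2 + b * r * t + c * t ^ 2) b' c' := by
  obtain ⟨u, v, huv⟩ := h
  refine ⟨-2 * a * r * v + b * (r * u - v * t) + 2 * c * t * u,
    a * v ^ 2 - b * v * u + c * u ^ 2, r, -v, t, u, ?_, fun x y ↦ by ring⟩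
  linear_combination huv

theorem isRelPrime_of_squarefree_quadraticForm {R : Type*} [CommSemiring R] {a b c x y : R}
    (h : Squarefree (a * x ^ 2 + b * x * y + c * y ^ 2)) : IsRelPrime x y := by
  rintro d ⟨x', rfl⟩ ⟨y', rfl⟩
  exact h d ⟨a * x' ^ 2 + b * x' * y' + c * y' ^ 2, by ring⟩

theorem ambiguous_of_rep_prime_dvd_disc_general (n : ℤ) (hn : Squarefree n)
    (a b c : ℤ) (hdisc : n ∣ b ^ 2 - 4 * a * c)
    (hrep : ∃ x y : ℤ, a * x ^ 2 + b * x * y + c * y ^ 2 = n) :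
    IsAmbiguous a b c := by
  obtain ⟨x, y, rfl⟩ := hrep
  have hxy : IsCoprime x y := (isRelPrime_of_squarefree_quadraticForm hn).isCoprime
  obtain ⟨b', c', hequiv⟩ := exists_properEquiv_of_isCoprime a b c hxy
  rw [← hequiv.disc_eq] at hdisc
  exact (isAmbiguous_of_squarefree_dvd_disc hn hdisc).of_properEquiv hequiv

/-- If a primitive positive definite integral binary quadratic form `g` of
discriminant `D < 0`, `D ≡ 0, 1 (mod 4)`, represents a prime `p` dividing `D`, then `g`
is ambiguous, i.e. properly equivalent to its opposite. -/
theorem ambiguous_of_rep_prime_dvd_disc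
    (D : ℤ) (hDneg : D < 0) (hDmod : D % 4 = 0 ∨ D % 4 = 1)
    (p : ℕ) (hp : p.Prime) (hpD : (p : ℤ) ∣ D)
    (a b c : ℤ) (ha : 0 < a) (hprim : Int.gcd a (Int.gcd b c) = 1)
    (hD : b ^ 2 - 4 * a * c = D)
    (hrep : ∃ x y : ℤ, a * x ^ 2 + b * x * y + c * y ^ 2 = (p : ℤ)) :
    ProperEquiv a b c a (-b) c :=
  ambiguous_of_rep_prime_dvd_disc_general p (Nat.prime_iff_prime_int.mp hp).squarefree
    a b c (hD ▸ hpD) hrep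
end

section
/- Let a be a positive integer that is not a perfect square, and let b be any positive integer. Then there exist positive integers M and r with gcd(r, M) = 1, and a finite set S of primes, such that every odd prime p ∉ S with p ≡ r (mod M) satisfies: a is a quadratic non-residue modulo p (so the Legendre symbol (a/p) = −1), and −b is a nonzero quadratic residue modulo p (so the Legendre symbol (−b/p) = 1). -/
/-!
The Jacobi symbol `J(a | n)` at odd `n` depends only on `n` modulo `4 * |a|`, so it suffices to
find one odd `r` with `J(a | r) = -1` and `J(c | r) = 1`, where `c = -b`.

A nonsquare integer is a nonresidue modulo arbitrarily large primes. Indeed, if its squarefree part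
is `ℓ * m` with `ℓ` an odd prime, then by quadratic reciprocity the symbol is `-1` at large primes
that are `1` modulo `4 * |m|` and a nonresidue modulo `ℓ`, and Dirichlet's theorem provides them;
the remaining squarefree parts `-1`, `2`, `-2` have symbol `-1` at `3`, `5`, `5`.

So there are primes `p ∤ c` with `J(a | p) = -1` and `q` with `J(a * c | q) = -1`, the product
`a * c = -(a * b)` being negative and hence not a square. If `J(c | p) = 1`, then `r = p` works.
If `J(a | q) = -1`, then `J(c | q) = 1` and `r = q` works. Otherwise the symbols of `(a, c)` are
`(-1, -1)` at `p` and `(1, -1)` at `q`, and `r = p * q` works.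
-/

open scoped NumberTheorySymbols

theorem odd_of_modEq_four_mul {k m n : ℕ} (hn : Odd n) (h : m ≡ n [MOD 4 * k]) : Odd m := by
  have hmod4 : m % 4 = n % 4 := h.of_mul_right k
  grind

theorem jacobiSym_congr_right {a : ℤ} {m n : ℕ} (hn : Odd n) (h : m ≡ n [MOD 4 * a.natAbs]) :
    J(a | m) = J(a | n) := by
  rw [jacobiSym.mod_right a (odd_of_modEq_four_mul hn h), h, ← jacobiSym.mod_right a hn]

theorem coprime_four_mul_natAbs_of_jacobiSym_ne_zero {a : ℤ} {n : ℕ} (hn : Odd n)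
    (h : J(a | n) ≠ 0) : n.Coprime (4 * a.natAbs) := by
  have hgcd : a.gcd n = 1 := by simpa [jacobiSym.eq_zero_iff, hn.pos.ne'] using h
  exact Nat.Coprime.mul_right (hn.coprime_two_right.pow_right 2) (Nat.Coprime.symm hgcd)

theorem gcd_eq_one_of_prime_of_natAbs_lt {a : ℤ} {p : ℕ} (hp : p.Prime) (ha : a ≠ 0)
    (h : a.natAbs < p) : a.gcd p = 1 :=
  (Nat.coprime_of_lt_prime (Int.natAbs_ne_zero.mpr ha) h hp).symm

theorem exists_jacobiSym_prime_eq_neg_one {q : ℕ} (hq : q.Prime) (hodd : Odd q) :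
    ∃ w : ℕ, J(w | q) = -1 := by
  have : Fact q.Prime := ⟨hq⟩
  obtain ⟨w, hw⟩ := FiniteField.exists_nonsquare (F := ZMod q)
    (by rw [ZMod.ringChar_zmod_n]; exact hodd.ne_two_of_dvd_nat dvd_rfl)
  refine ⟨w.val, ZMod.nonsquare_iff_jacobiSym_eq_neg_one.mpr ?_⟩
  rwa [Int.cast_natCast, ZMod.natCast_zmod_val]

theorem exists_odd_jacobiSym_prime_mul_eq_neg_one {q : ℕ} (hq : q.Prime) (hodd : Odd q) {m : ℤ}
    (hqm : q.Coprime m.natAbs) : ∃ n : ℕ, Odd n ∧ J(q * m | n) = -1 := by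
  obtain ⟨w, hw⟩ := exists_jacobiSym_prime_eq_neg_one hq hodd
  have hcoprime : (4 * m.natAbs).Coprime q :=
    (Nat.Coprime.mul_right (hodd.coprime_two_right.pow_right 2) hqm).symm
  obtain ⟨n, hn_one, hn_w⟩ := Nat.chineseRemainder hcoprime 1 w
  have hn4 : n % 4 = 1 := hn_one.of_mul_right m.natAbs
  have hq_n : J(q | n) = -1 := by
    rw [jacobiSym.quadratic_reciprocity_one_mod_four' hodd hn4, ← hw]
    exact jacobiSym.mod_left' (Int.natCast_modEq_iff.mpr hn_w)
  have hm_n : J(m | n) = 1 := by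
    rw [jacobiSym_congr_right odd_one hn_one, jacobiSym.one_right]
  exact ⟨n, odd_of_modEq_four_mul odd_one hn_one, by rw [jacobiSym.mul_left, hq_n, hm_n, mul_one]⟩

theorem eq_one_or_eq_two_or_exists_odd_prime_dvd_of_squarefree {n : ℕ} (hn : Squarefree n) :
    n = 1 ∨ n = 2 ∨ ∃ q, q.Prime ∧ q ∣ n ∧ Odd q := by
  rcases n.eq_two_pow_or_exists_odd_prime_and_dvd with ⟨k, rfl⟩ | hq
  · rcases hn.eq_zero_or_one_of_pow_of_not_isUnit Nat.prime_two.not_isUnit with rfl | rfl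
    · exact Or.inl rfl
    · exact Or.inr (Or.inl rfl)
  · exact Or.inr (Or.inr hq)

theorem exists_odd_jacobiSym_eq_neg_one_of_squarefree {d : ℤ} (hd : Squarefree d) (hd1 : d ≠ 1) :
    ∃ n : ℕ, Odd n ∧ J(d | n) = -1 := by
  rcases eq_one_or_eq_two_or_exists_odd_prime_dvd_of_squarefree (Int.squarefree_natAbs.mpr hd)
    with h | h | ⟨q, hq, hqd, hodd⟩
  · obtain rfl : d = -1 := by omega
    exact ⟨3, by decide, by norm_num⟩
  · obtain rfl | rfl : d = 2 ∨ d = -2 := by omega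
    all_goals exact ⟨5, by decide, by norm_num⟩
  · obtain ⟨m, rfl⟩ := Int.natCast_dvd.mpr hqd
    have hqm : Squarefree (q * m.natAbs) := by
      simpa [Int.natAbs_mul] using Int.squarefree_natAbs.mpr hd
    exact exists_odd_jacobiSym_prime_mul_eq_neg_one hq hodd (Nat.squarefree_mul_iff.mp hqm).1

theorem exists_sq_mul_squarefree_int (a : ℤ) : ∃ t d : ℤ, t ^ 2 * d = a ∧ Squarefree d := by
  obtain ⟨d, t, hdt, hd⟩ := Nat.sq_mul_squarefree a.natAbs
  rcases a.natAbs_eq with ha | ha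
  · exact ⟨t, d, by rw [ha, ← hdt]; push_cast; rfl, Int.squarefree_natCast.mpr hd⟩
  · exact ⟨t, -d, by rw [ha, ← hdt]; push_cast; ring, by simpa [← Int.squarefree_natAbs] using hd⟩

theorem exists_prime_gt_jacobiSym_eq_neg_one {a : ℤ} (ha : ¬ IsSquare a) (N : ℕ) :
    ∃ p > N, p.Prime ∧ Odd p ∧ J(a | p) = -1 := by
  obtain ⟨t, d, rfl, hd⟩ := exists_sq_mul_squarefree_int a
  have hd1 : d ≠ 1 := by
    rintro rfl
    exact ha ⟨t, by ring⟩
  have ht : t ≠ 0 := by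
    rintro rfl
    exact ha (by simp)
  obtain ⟨n, hn, hdn⟩ := exists_odd_jacobiSym_eq_neg_one_of_squarefree hd hd1
  obtain ⟨p, hp_gt, hp, hpn⟩ := Nat.forall_exists_prime_gt_and_modEq (max N t.natAbs)
    (mul_ne_zero four_ne_zero (Int.natAbs_ne_zero.mpr hd.ne_zero))
    (coprime_four_mul_natAbs_of_jacobiSym_ne_zero hn (by rw [hdn]; decide))
  obtain ⟨hpN, hpt⟩ := max_lt_iff.mp hp_gt
  refine ⟨p, hpN, hp, odd_of_modEq_four_mul hn hpn, ?_⟩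
  rw [jacobiSym.mul_left, jacobiSym.sq_one' (gcd_eq_one_of_prime_of_natAbs_lt hp ht hpt),
    jacobiSym_congr_right hn hpn, hdn, one_mul]

theorem exists_odd_jacobiSym_eq_neg_one_and_eq_one {a c : ℤ} (ha : ¬ IsSquare a)
    (hac : ¬ IsSquare (a * c)) : ∃ r : ℕ, Odd r ∧ J(a | r) = -1 ∧ J(c | r) = 1 := by
  have hc : c ≠ 0 := by
    rintro rfl
    exact hac (by simp)
  obtain ⟨p, hp_gt, hp, hp_odd, hap⟩ := exists_prime_gt_jacobiSym_eq_neg_one ha c.natAbs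
  obtain ⟨q, -, hq, hq_odd, hacq⟩ := exists_prime_gt_jacobiSym_eq_neg_one hac 0
  rw [jacobiSym.mul_left] at hacq
  rcases jacobiSym.eq_one_or_neg_one (gcd_eq_one_of_prime_of_natAbs_lt hp hc hp_gt) with hcp | hcp
  · exact ⟨p, hp_odd, hap, hcp⟩
  rcases Int.mul_eq_neg_one_iff_eq_one_or_neg_one.mp hacq with ⟨haq, hcq⟩ | ⟨haq, hcq⟩
  · refine ⟨p * q, hp_odd.mul hq_odd, ?_, ?_⟩
    · rw [jacobiSym.mul_right' a hp.ne_zero hq.ne_zero, hap, haq, mul_one]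
    · rw [jacobiSym.mul_right' c hp.ne_zero hq.ne_zero, hcp, hcq, neg_one_mul, neg_neg]
  · exact ⟨q, hq_odd, haq, hcq⟩

theorem exists_AP_legendre_general {a c : ℤ} (ha : ¬ IsSquare a) (hac : ¬ IsSquare (a * c)) :
    ∃ M r : ℕ, 0 < M ∧ 0 < r ∧ r.Coprime M ∧ ∀ p : ℕ, p.Prime → p ≡ r [MOD M] →
      ¬ IsSquare (a : ZMod p) ∧ IsSquare (c : ZMod p) ∧ (c : ZMod p) ≠ 0 := by
  obtain ⟨r, hr, har, hcr⟩ := exists_odd_jacobiSym_eq_neg_one_and_eq_one ha hac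
  have hac0 : a * c ≠ 0 := fun h ↦ hac (h ▸ IsSquare.zero)
  refine ⟨4 * (a * c).natAbs, r, by positivity, hr.pos,
    coprime_four_mul_natAbs_of_jacobiSym_ne_zero hr (by simp [jacobiSym.mul_left, har, hcr]), ?_⟩
  intro p hp hpr
  have : Fact p.Prime := ⟨hp⟩
  have symbol_eq {d : ℤ} (hd : d ∣ a * c) : J(d | p) = J(d | r) :=
    jacobiSym_congr_right hr (hpr.of_dvd (mul_dvd_mul_left 4 (Int.natAbs_dvd_natAbs.mpr hd)))
  have hap : J(a | p) = -1 := (symbol_eq (dvd_mul_right a c)).trans har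
  have hcp : J(c | p) = 1 := (symbol_eq (dvd_mul_left c a)).trans hcr
  refine ⟨ZMod.nonsquare_of_jacobiSym_eq_neg_one hap, ZMod.isSquare_of_jacobiSym_eq_one hcp, ?_⟩
  rw [Ne, ← legendreSym.eq_zero_iff, jacobiSym.legendreSym.to_jacobiSym, hcp]
  exact one_ne_zero

/-- For a nonsquare positive integer `a` and any positive integer `b`,
there is an arithmetic progression `r (mod M)` with `gcd(r, M) = 1` and a finite
exceptional set `S` of primes such that every odd prime `p ∉ S` with `p ≡ r (mod M)`
satisfies `(a/p) = -1` and `(-b/p) = 1`. -/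
theorem exists_AP_legendre (a b : ℕ) (ha : 0 < a) (hnsq : ¬ IsSquare a) (hb : 0 < b) :
    ∃ (M r : ℕ) (S : Finset ℕ), 0 < M ∧ 0 < r ∧ Nat.Coprime r M ∧
      ∀ p : ℕ, p.Prime → Odd p → p ∉ S → p % M = r % M →
        ¬ IsSquare ((a : ZMod p)) ∧
          IsSquare (((-(b : ℤ) : ℤ) : ZMod p)) ∧ (((-(b : ℤ) : ℤ) : ZMod p)) ≠ 0 := by
  have hneg : (a : ℤ) * -b < 0 := mul_neg_of_pos_of_neg (by positivity) (by simpa)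
  obtain ⟨M, r, hM, hr, hrM, h⟩ := exists_AP_legendre_general (a := a) (c := -b)
    (by simpa [Int.isSquare_natCast_iff] using hnsq) (fun hsq ↦ hneg.not_ge hsq.nonneg)
  exact ⟨M, r, ∅, hM, hr, hrM, fun p hp _ _ hpr ↦ by simpa using h p hp hpr⟩
end

section
/- Let ℓ(x,y) = a x² + b x y + c y² be a primitive positive definite integral binary quadratic form (gcd(a,b,c) = 1) of discriminant D = b² − 4ac < 0, regarded as the quadratic lattice (ℤ², Q) with Q(x,y) = a x² + b x y + c y². Let p be a prime with Kronecker symbol (D/p) = 1, i.e., either p is odd, p ∤ D, and D is a nonzero square modulo p, or p = 2 and D ≡ 1 (mod 8). Then there are exactly two ℤ-submodules M of ℤ² of index p (as additive groups) such that p divides Q(v) for every v ∈ M. -/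
/-- The submodule `M` of `ℤ²` has index `p` (as an additive subgroup) and the norm of the
sublattice `M` of the binary lattice given by `(a, b, c)` is contained in `pℤ`. -/
def IndexPNormP (a b c : ℤ) (p : ℕ) (M : Submodule ℤ (Fin 2 → ℤ)) : Prop :=
  M.toAddSubgroup.index = p ∧
    ∀ v ∈ M, (p : ℤ) ∣ (a * (v 0) ^ 2 + b * (v 0) * (v 1) + c * (v 1) ^ 2)

/-!
Since the discriminant is a nonzero square modulo `p` (and is `1` modulo `8` when `p = 2`),
`X ^ 2 - b * X + a * c` has two distinct roots `e` and `b - e` modulo `p`. The matrix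
`!![a, e; b - e, c]` represents the quadratic form and is singular modulo `p`, hence an outer
product, so the form is modulo `p` a product of two linear forms; these are not proportional
because `e ≠ b - e`. A subgroup on which the product vanishes is covered by the two kernels, so it
lies in one of them, and it equals that kernel when it has the same index `p`.
-/

open Matrix

section Subgroups

variable {G : Type*} [AddGroup G]

theorem addSubgroup_eq_of_le_of_index_eq {H K : AddSubgroup G} [H.FiniteIndex] (hle : H ≤ K)
    (hindex : H.index = K.index) : H = K :=
  eq_of_le_of_not_lt hle fun hlt => (AddSubgroup.index_strictAnti hlt).ne' hindex

theorem le_ker_or_le_ker_of_forall_mul_eq_zero {R : Type*} [NonUnitalNonAssocRing R]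
    [NoZeroDivisors R] {f g : G →+ R} {H : AddSubgroup G} (h : ∀ v ∈ H, f v * g v = 0) :
    H ≤ f.ker ∨ H ≤ g.ker :=
  AddSubgroupClass.subset_union.mp fun v hv => mul_eq_zero.mp (h v hv)

variable {p : ℕ} [Fact p.Prime]

theorem index_ker_of_ne_zero {f : G →+ ZMod p} (hf : f ≠ 0) : f.ker.index = p := by
  have : Fact (Nat.card (ZMod p)).Prime := by rwa [Nat.card_zmod]
  have hrange : f.range = ⊤ :=
    f.range.eq_bot_or_eq_top_of_prime_card.resolve_left (mt AddMonoidHom.range_eq_bot_iff.mp hf)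
  rw [AddSubgroup.index_ker, hrange, AddSubgroup.card_top, Nat.card_zmod]

theorem index_eq_and_forall_mul_eq_zero_iff {f g : G →+ ZMod p} (hf : f ≠ 0) (hg : g ≠ 0)
    {H : AddSubgroup G} :
    (H.index = p ∧ ∀ v ∈ H, f v * g v = 0) ↔ H = f.ker ∨ H = g.ker := by
  constructor
  · rintro ⟨hindex, hvanish⟩
    have : H.FiniteIndex := ⟨hindex ▸ (Fact.out : p.Prime).ne_zero⟩
    exact (le_ker_or_le_ker_of_forall_mul_eq_zero hvanish).imp
      (addSubgroup_eq_of_le_of_index_eq · (hindex.trans (index_ker_of_ne_zero hf).symm))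
      (addSubgroup_eq_of_le_of_index_eq · (hindex.trans (index_ker_of_ne_zero hg).symm))
  · rintro (rfl | rfl)
    · exact ⟨index_ker_of_ne_zero hf, fun v hv => mul_eq_zero_of_left hv _⟩
    · exact ⟨index_ker_of_ne_zero hg, fun v hv => mul_eq_zero_of_right _ hv⟩

end Subgroups

section Factorization

variable {K : Type*} [Field K]

theorem exists_eq_vecMulVec_of_det_eq_zero {M : Matrix (Fin 2) (Fin 2) K} (hM : M.det = 0) :
    ∃ w z : Fin 2 → K, M = vecMulVec w z := by
  rw [det_fin_two] at hM
  by_cases hrow : M 0 = 0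
  · refine ⟨![0, 1], M 1, ?_⟩
    ext i j
    fin_cases i <;> simp [vecMulVec_apply, hrow]
  · obtain ⟨j, hj : M 0 j ≠ 0⟩ := Function.ne_iff.mp hrow
    refine ⟨fun i => M i j / M 0 j, M 0, ?_⟩
    ext i k
    rw [vecMulVec_apply, div_mul_eq_mul_div, eq_div_iff hj]
    fin_cases i <;> fin_cases j <;> fin_cases k <;> grind

theorem exists_binaryForm_eq_dotProduct_mul_dotProduct {a b c e : K} (he : e * (b - e) = a * c) :
    ∃ w z : Fin 2 → K, w 0 * z 1 = e ∧ w 1 * z 0 = b - e ∧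
      ∀ v : Fin 2 → K,
        a * v 0 ^ 2 + b * v 0 * v 1 + c * v 1 ^ 2 = (w ⬝ᵥ v) * (z ⬝ᵥ v) := by
  obtain ⟨w, z, hwz⟩ := exists_eq_vecMulVec_of_det_eq_zero (M := !![a, e; b - e, c])
    (by rw [det_fin_two_of, he, sub_self])
  have entry (i j : Fin 2) : !![a, e; b - e, c] i j = w i * z j := by
    rw [hwz, vecMulVec_apply]
  have ha : a = w 0 * z 0 := entry 0 0
  have he : e = w 0 * z 1 := entry 0 1
  have hbe : b - e = w 1 * z 0 := entry 1 0
  have hc : c = w 1 * z 1 := entry 1 1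
  refine ⟨w, z, he.symm, hbe.symm, fun v => ?_⟩
  rw [dotProduct, dotProduct, Fin.sum_univ_two, Fin.sum_univ_two]
  linear_combination v 0 ^ 2 * ha + v 0 * v 1 * (he + hbe) + v 1 ^ 2 * hc

theorem exists_mul_sub_eq_of_isSquare [NeZero (2 : K)] {b q : K} (h : IsSquare (b ^ 2 - 4 * q)) :
    ∃ e : K, e * (b - e) = q := by
  obtain ⟨d, hd⟩ := h
  obtain ⟨e, he⟩ := exists_quadratic_eq_zero (a := 1) (b := -b) (c := q) one_ne_zero
    ⟨d, by rw [discrim, ← hd]; ring⟩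
  exact ⟨e, by linear_combination -he⟩

end Factorization

theorem even_of_sq_sub_four_mul_emod_eight {b q : ℤ} (h : (b ^ 2 - 4 * q) % 8 = 1) : Even q := by
  have hb : Odd b := (Int.odd_pow' two_ne_zero).mp (Int.odd_iff.mpr (by omega))
  have := Int.eight_dvd_sq_sub_one_of_odd hb
  exact even_iff_two_dvd.mpr (by omega)

theorem exists_mul_sub_eq_and_ne {p : ℕ} [Fact p.Prime] {a b c D : ℤ} (hD : D = b ^ 2 - 4 * a * c)
    (hkron : (Odd p ∧ ¬ (p : ℤ) ∣ D ∧ IsSquare (D : ZMod p)) ∨ (p = 2 ∧ D % 8 = 1)) :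
    ∃ e : ZMod p, e * (b - e) = a * c ∧ e ≠ b - e := by
  rw [mul_assoc] at hD
  have hDcast : (D : ZMod p) = b ^ 2 - 4 * (a * c) := by exact_mod_cast congrArg Int.cast hD
  have hDzero : (D : ZMod p) ≠ 0 := by
    rw [Ne, ZMod.intCast_zmod_eq_zero_iff_dvd]
    rcases hkron with ⟨-, hndvd, -⟩ | ⟨rfl, hmod⟩
    · exact hndvd
    · omega
  have hroot : ∃ e : ZMod p, e * (b - e) = a * c := by
    rcases hkron with ⟨hodd, -, hsq⟩ | ⟨rfl, hmod⟩
    · have hp2 : p ≠ 2 := by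
        rintro rfl
        exact Nat.not_odd_iff_even.mpr even_two hodd
      have : NeZero (2 : ZMod p) := ⟨by exact_mod_cast ZMod.prime_ne_zero p 2 hp2⟩
      exact exists_mul_sub_eq_of_isSquare (hDcast ▸ hsq)
    · have heven : Even (a * c) := even_of_sq_sub_four_mul_emod_eight (hD ▸ hmod)
      refine ⟨0, ?_⟩
      rw [zero_mul, ← Int.cast_mul, eq_comm, ZMod.intCast_zmod_eq_zero_iff_dvd]
      exact heven.two_dvd
  obtain ⟨e, he⟩ := hroot
  refine ⟨e, he, fun heq => hDzero ?_⟩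
  linear_combination hDcast + 4 * he + (2 * e - b) * heq

section LinearForms

theorem linearCombination_ne_zero {ι R M : Type*} [Fintype ι] [Semiring R] [AddCommMonoid M]
    [Module R M] {w : ι → M} (hw : w ≠ 0) : Fintype.linearCombination R w ≠ 0 := by
  classical
  contrapose! hw
  ext i
  simpa [hw] using (Fintype.linearCombination_apply_single R w i 1).symm

variable {p : ℕ} {w z : Fin 2 → ZMod p}

theorem ker_linearCombination_ne (hwz : w 0 * z 1 ≠ w 1 * z 0) :
    (Fintype.linearCombination ℤ w).ker ≠ (Fintype.linearCombination ℤ z).ker := by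
  obtain ⟨m, hm⟩ := ZMod.intCast_surjective (-w 1)
  obtain ⟨n, hn⟩ := ZMod.intCast_surjective (w 0)
  have apply_mn (u : Fin 2 → ZMod p) :
      Fintype.linearCombination ℤ u ![m, n] = w 0 * u 1 - w 1 * u 0 := by
    simp only [Fintype.linearCombination_apply, Fin.sum_univ_two, cons_val_zero, cons_val_one,
      zsmul_eq_mul, hm, hn]
    ring
  intro hker
  have hmem : ![m, n] ∈ (Fintype.linearCombination ℤ w).ker := by
    rw [LinearMap.mem_ker, apply_mn, mul_comm, sub_self]
  rw [hker, LinearMap.mem_ker, apply_mn, sub_eq_zero] at hmem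
  exact hwz hmem

theorem indexPNormP_iff_eq_ker_or_eq_ker [Fact p.Prime] {a b c : ℤ} (hw : w ≠ 0) (hz : z ≠ 0)
    (hfactor : ∀ v : Fin 2 → ZMod p,
      a * v 0 ^ 2 + b * v 0 * v 1 + c * v 1 ^ 2 = (w ⬝ᵥ v) * (z ⬝ᵥ v))
    {M : Submodule ℤ (Fin 2 → ℤ)} :
    IndexPNormP a b c p M ↔
      M = (Fintype.linearCombination ℤ w).ker ∨ M = (Fintype.linearCombination ℤ z).ker := by
  have apply_eq_dotProduct (u : Fin 2 → ZMod p) (v : Fin 2 → ℤ) :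
      Fintype.linearCombination ℤ u v = u ⬝ᵥ fun i => (v i : ZMod p) := by
    simp only [Fintype.linearCombination_apply, dotProduct, zsmul_eq_mul, mul_comm]
  have dvd_iff (v : Fin 2 → ℤ) :
      (p : ℤ) ∣ a * v 0 ^ 2 + b * v 0 * v 1 + c * v 1 ^ 2 ↔
        Fintype.linearCombination ℤ w v * Fintype.linearCombination ℤ z v = 0 := by
    rw [apply_eq_dotProduct, apply_eq_dotProduct, ← hfactor, ← ZMod.intCast_zmod_eq_zero_iff_dvd]
    push_cast
    rfl
  have toAddMonoidHom_ne_zero {u : Fin 2 → ZMod p} (hu : u ≠ 0) :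
      (Fintype.linearCombination ℤ u).toAddMonoidHom ≠ 0 :=
    fun h => linearCombination_ne_zero hu (LinearMap.toAddMonoidHom_injective h)
  simp only [IndexPNormP, dvd_iff, ← Submodule.toAddSubgroup_inj, LinearMap.ker_toAddSubgroup]
  exact index_eq_and_forall_mul_eq_zero_iff (toAddMonoidHom_ne_zero hw) (toAddMonoidHom_ne_zero hz)

end LinearForms

theorem exactly_two_sublattices_general {a b c D : ℤ} (hD : D = b ^ 2 - 4 * a * c)
    {p : ℕ} (hp : p.Prime)
    (hkron : (Odd p ∧ ¬ (p : ℤ) ∣ D ∧ IsSquare (D : ZMod p)) ∨ (p = 2 ∧ D % 8 = 1)) :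
    ∃ M₁ M₂ : Submodule ℤ (Fin 2 → ℤ), M₁ ≠ M₂ ∧
      IndexPNormP a b c p M₁ ∧ IndexPNormP a b c p M₂ ∧
      ∀ M : Submodule ℤ (Fin 2 → ℤ), IndexPNormP a b c p M → M = M₁ ∨ M = M₂ := by
  have : Fact p.Prime := ⟨hp⟩
  obtain ⟨e, he, hne⟩ := exists_mul_sub_eq_and_ne hD hkron
  obtain ⟨w, z, hwz, hzw, hfactor⟩ := exists_binaryForm_eq_dotProduct_mul_dotProduct he
  rw [← hzw, ← hwz] at hne
  have hw : w ≠ 0 := by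
    rintro rfl
    simp at hne
  have hz : z ≠ 0 := by
    rintro rfl
    simp at hne
  have classify {M : Submodule ℤ (Fin 2 → ℤ)} :=
    indexPNormP_iff_eq_ker_or_eq_ker (M := M) hw hz hfactor
  exact ⟨_, _, ker_linearCombination_ne hne, classify.mpr (.inl rfl), classify.mpr (.inr rfl),
    fun _ => classify.mp⟩

/-- Let `(a, b, c)` be a primitive positive definite integral binary
quadratic form of discriminant `D < 0`, and `p` a prime with `(D/p) = 1`. Then there
are exactly two index-`p` sublattices of `ℤ²` whose norm is contained in `pℤ`. -/
theorem exactly_two_sublattices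
    (a b c : ℤ) (ha : 0 < a) (hprim : Int.gcd a (Int.gcd b c) = 1)
    (D : ℤ) (hD : D = b ^ 2 - 4 * a * c) (hDneg : D < 0)
    (p : ℕ) (hp : p.Prime)
    (hkron : (Odd p ∧ ¬ (p : ℤ) ∣ D ∧ IsSquare (D : ZMod p)) ∨ (p = 2 ∧ D % 8 = 1)) :
    ∃ M₁ M₂ : Submodule ℤ (Fin 2 → ℤ), M₁ ≠ M₂ ∧
      IndexPNormP a b c p M₁ ∧ IndexPNormP a b c p M₂ ∧
      ∀ M : Submodule ℤ (Fin 2 → ℤ), IndexPNormP a b c p M → M = M₁ ∨ M = M₂ :=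
  exactly_two_sublattices_general hD hp hkron
end

section
/- The ternary quadratic form g(x,y,z) = 2x² + 2y² + 5z² represents n² for every integer n ≥ 2 (i.e., for each n ≥ 2 there exist x, y, z ∈ ℤ with 2x² + 2y² + 5z² = n²), but g does not represent 1. Consequently, g is a ternary isolation of the unary form x², whose proper sublattices are exactly ⟨n²⟩ for n ≥ 2. -/
/-!
Let `f x y = 2x² + 2xy + 3y²`. Then `2 f s t = |α|²` for `α = 2s + (1 + √-5)t`, an element of the
ideal `(2, 1 + √-5)`, whose square is `(2)`. Dividing the Hopf identity
`|α² - β̄²|² + (2 Re αβ)² = (|α|² + |β|²)²` by `4` therefore stays integral, and it writes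
`(f s t + f u v)²` as `(2p)² + (2q)² + 5r² = 2(p + q)² + 2(p - q)² + 5r²`.

The form `f ⊥ f` is isometric to the sublattice `a + 2b ≡ c + 2d (mod 5)` of `ℤ⁴`. Using sign
changes, permutations and multiplication by the unit-norm Gaussian number `(3 + 4i) / 5`, every
nonzero sum of two squares can be written `a² + b²` with `a + 2b ≡ 1 (mod 5)`. By Lagrange's theorem
a non-square natural number is a sum of two such, hence a value of `f ⊥ f`. This covers the primes,
and scaling the representation of `p²` by `m` gives that of `(pm)²`.
-/

/-- The reduced non-principal binary quadratic form of discriminant `-20`, with values taken in an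
arbitrary commutative ring; over `ℤ` it is half the norm form of `ℚ(√-5)` on the basis
`2, 1 + √-5` of a non-principal ideal. -/
def nonprincipalForm {R : Type*} [CommRing R] (x y : R) : R := 2 * x ^ 2 + 2 * x * y + 3 * y ^ 2

section CommRing

variable {R : Type*} [CommRing R]

theorem exists_ternary_eq_sq_nonprincipalForm_add (s t u v : R) :
    ∃ x y z : R, 2 * x ^ 2 + 2 * y ^ 2 + 5 * z ^ 2 =
      (nonprincipalForm s t + nonprincipalForm u v) ^ 2 := by
  -- `2p + r√-5 = (α² - β̄²) / 2` and `2q = Re αβ`, where `β = 2u + (1 + √-5)v`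
  let p := (s ^ 2 + s * t - t ^ 2) - (u ^ 2 + u * v - v ^ 2)
  let q := 2 * s * u + s * v + t * u - 2 * t * v
  let r := (2 * s * t + t ^ 2) + (2 * u * v + v ^ 2)
  refine ⟨p + q, p - q, r, ?_⟩
  simp only [p, q, r, nonprincipalForm]
  ring

theorem exists_nonprincipalForm_add_eq_sum_four_sq {a b c d : R}
    (h : 5 ∣ (a + 2 * b) - (c + 2 * d)) :
    ∃ s t u v : R, nonprincipalForm s t + nonprincipalForm u v =
      a ^ 2 + b ^ 2 + c ^ 2 + d ^ 2 := by
  obtain ⟨k, hk⟩ := h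
  obtain rfl : a = 5 * k - 2 * b + c + 2 * d := by linear_combination hk
  refine ⟨2 * k - b + c + d, k, k + d, b - d - 2 * k, ?_⟩
  simp only [nonprincipalForm]
  ring

end CommRing

theorem exists_sq_add_sq_eq_and_modEq_one_of_not_dvd {x y : ℤ} (h : ¬(5 ∣ x ∧ 5 ∣ y)) :
    ∃ a b : ℤ, a ^ 2 + b ^ 2 = x ^ 2 + y ^ 2 ∧ a + 2 * b ≡ 1 [ZMOD 5] := by
  have signed_swap : ∀ x y : ZMod 5, ¬(x = 0 ∧ y = 0) →
      x + 2 * y = 1 ∨ x + 2 * -y = 1 ∨ -x + 2 * y = 1 ∨ -x + 2 * -y = 1 ∨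
      y + 2 * x = 1 ∨ y + 2 * -x = 1 ∨ -y + 2 * x = 1 ∨ -y + 2 * -x = 1 := by
    decide
  have h_cast : ¬((x : ZMod 5) = 0 ∧ (y : ZMod 5) = 0) := by
    simpa only [ZMod.intCast_zmod_eq_zero_iff_dvd, Nat.cast_ofNat] using h
  have modEq_of_cast {a b : ℤ} (hab : (a : ZMod 5) + 2 * b = 1) : a + 2 * b ≡ 1 [ZMOD 5] :=
    (ZMod.intCast_eq_intCast_iff _ _ 5).mp (mod_cast hab)
  rcases signed_swap x y h_cast with e | e | e | e | e | e | e | e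
  · exact ⟨x, y, rfl, modEq_of_cast e⟩
  · exact ⟨x, -y, by ring, modEq_of_cast (mod_cast e)⟩
  · exact ⟨-x, y, by ring, modEq_of_cast (mod_cast e)⟩
  · exact ⟨-x, -y, by ring, modEq_of_cast (mod_cast e)⟩
  · exact ⟨y, x, by ring, modEq_of_cast e⟩
  · exact ⟨y, -x, by ring, modEq_of_cast (mod_cast e)⟩
  · exact ⟨-y, x, by ring, modEq_of_cast (mod_cast e)⟩
  · exact ⟨-y, -x, by ring, modEq_of_cast (mod_cast e)⟩

theorem exists_sq_add_sq_eq_and_modEq_one {x y : ℤ} (h : ¬(x = 0 ∧ y = 0)) :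
    ∃ a b : ℤ, a ^ 2 + b ^ 2 = x ^ 2 + y ^ 2 ∧ a + 2 * b ≡ 1 [ZMOD 5] := by
  by_cases h5 : 5 ∣ x ∧ 5 ∣ y
  · obtain ⟨⟨x, rfl⟩, ⟨y, rfl⟩⟩ := h5
    obtain ⟨a, b, hsum, hmod⟩ := exists_sq_add_sq_eq_and_modEq_one (x := x) (y := y) (by omega)
    -- `(3 + 4i)(a + bi)` has norm `25 (a² + b²)`
    refine ⟨3 * a - 4 * b, 4 * a + 3 * b, by linear_combination 25 * hsum, ?_⟩
    simp only [Int.ModEq] at hmod ⊢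
    omega
  · exact exists_sq_add_sq_eq_and_modEq_one_of_not_dvd h5
termination_by x.natAbs + y.natAbs
decreasing_by omega

theorem exists_sum_four_sq_of_not_isSquare {n : ℕ} (hn : ¬IsSquare n) :
    ∃ a b c d : ℕ, ¬(a = 0 ∧ b = 0) ∧ ¬(c = 0 ∧ d = 0) ∧ a ^ 2 + b ^ 2 + c ^ 2 + d ^ 2 = n := by
  obtain ⟨a, b, c, d, rfl⟩ := Nat.sum_four_squares n
  have ne_zero_of_sum_two_sq {x y : ℕ} (h : a ^ 2 + b ^ 2 + c ^ 2 + d ^ 2 = x ^ 2 + y ^ 2) :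
      x ≠ 0 ∧ y ≠ 0 := by
    rw [h] at hn
    constructor <;> rintro rfl <;> simp [IsSquare.sq] at hn
  by_cases hab : a = 0 ∧ b = 0
  · obtain ⟨hc, hd⟩ := ne_zero_of_sum_two_sq (x := c) (y := d) (by simp [hab])
    exact ⟨c, 0, d, 0, by simp [hc], by simp [hd], by simp [hab]⟩
  by_cases hcd : c = 0 ∧ d = 0
  · obtain ⟨ha, hb⟩ := ne_zero_of_sum_two_sq (x := a) (y := b) (by simp [hcd])
    exact ⟨a, 0, b, 0, by simp [ha], by simp [hb], by simp [hcd]⟩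
  exact ⟨a, b, c, d, hab, hcd, rfl⟩

theorem exists_nonprincipalForm_add_eq_of_not_isSquare {n : ℕ} (hn : ¬IsSquare n) :
    ∃ s t u v : ℤ, nonprincipalForm s t + nonprincipalForm u v = n := by
  obtain ⟨x, y, z, w, hxy, hzw, rfl⟩ := exists_sum_four_sq_of_not_isSquare hn
  obtain ⟨a, b, hab, hab_mod⟩ :=
    exists_sq_add_sq_eq_and_modEq_one (x := x) (y := y) (mod_cast hxy)
  obtain ⟨c, d, hcd, hcd_mod⟩ :=
    exists_sq_add_sq_eq_and_modEq_one (x := z) (y := w) (mod_cast hzw)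
  obtain ⟨s, t, u, v, h⟩ :=
    exists_nonprincipalForm_add_eq_sum_four_sq (hcd_mod.trans hab_mod.symm).dvd
  refine ⟨s, t, u, v, ?_⟩
  push_cast
  linear_combination h + hab + hcd

theorem ternary_ne_one (x y z : ℤ) : 2 * x ^ 2 + 2 * y ^ 2 + 5 * z ^ 2 ≠ 1 := by
  intro h
  have hz : z ≠ 0 := by
    rintro rfl
    omega
  have hz_sq : 0 < z ^ 2 := by positivity
  linarith [sq_nonneg x, sq_nonneg y]

/-- The ternary quadratic form `2x² + 2y² + 5z²` represents `n²` for every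
integer `n ≥ 2`, but does not represent `1`; hence it is a ternary isolation of the
unary form `x²`. -/
theorem ternary_isolation_of_x_sq :
    (∀ n : ℤ, 2 ≤ n → ∃ x y z : ℤ, 2 * x ^ 2 + 2 * y ^ 2 + 5 * z ^ 2 = n ^ 2) ∧
      ¬ ∃ x y z : ℤ, 2 * x ^ 2 + 2 * y ^ 2 + 5 * z ^ 2 = 1 := by
  refine ⟨fun n hn ↦ ?_, fun ⟨x, y, z, h⟩ ↦ ternary_ne_one x y z h⟩
  lift n to ℕ using by omega
  obtain ⟨p, hp, m, rfl⟩ := Nat.exists_prime_and_dvd (n := n) (by omega)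
  obtain ⟨s, t, u, v, hpf⟩ := exists_nonprincipalForm_add_eq_of_not_isSquare hp.not_isSquare
  obtain ⟨x, y, z, h⟩ := exists_ternary_eq_sq_nonprincipalForm_add s t u v
  rw [hpf] at h
  refine ⟨m * x, m * y, m * z, ?_⟩
  push_cast
  linear_combination (m : ℤ) ^ 2 * h
end
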